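/- Let S_π be a positroid cell of the totally nonnegative Grassmannian Gr⁺_{k,n} with corresponding positroid M_π. Then the following are equivalent: (1) the moment map μ restricts to an injection on S_π; (2) μ restricts to a homeomorphism from the closure of S_π onto the positroid polytope Γ_π; (3) dim S_π = dim Γ_π = n − c, where c is the number of connected components of M_π. -/

import Mathlib

open scoped BigOperators

/-- The indicator vector `e_B ∈ ℝⁿ`. -/
noncomputable def ind (n : ℕ) (B : Finset (Fin n)) : Fin n → ℝ :=
  fun i => if i ∈ B then 1 else 0

/-- The maximal minor of a `k × n` matrix with column set `I` (zero if `|I| ≠ k`). -/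
noncomputable def minor (k n : ℕ) (A : Matrix (Fin k) (Fin n) ℝ) (I : Finset (Fin n)) : ℝ :=
  if h : I.card = k then (A.submatrix id fun j : Fin k => ((I.orderIsoOfFin h j : I) : Fin n)).det
  else 0

/-- Exchange relation on `[n]` whose equivalence classes are the connected
components of the matroid with bases `𝓜`. -/
def exchRel (n : ℕ) (𝓜 : Finset (Finset (Fin n))) (a b : Fin n) : Prop :=
  a = b ∨ ∃ B₁ ∈ 𝓜, ∃ B₂ ∈ 𝓜, a ∈ B₁ ∧ b ∉ B₁ ∧ B₂ = insert b (B₁.erase a)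

/-- The positroid cell `S_𝓜` inside the totally nonnegative Grassmannian,
realized via (normalized) Plücker vectors: points `p` in the image of the
Plücker embedding with `∑ p_I² = 1`, whose coordinates indexed by `𝓜` are
positive and all other coordinates vanish. -/
def positroidCell (n k : ℕ) (𝓜 : Finset (Finset (Fin n))) :
    Set (Finset (Fin n) → ℝ) :=
  {p | (∃ A : Matrix (Fin k) (Fin n) ℝ, ∀ I : Finset (Fin n), p I = minor k n A I) ∧
       (∑ I : Finset (Fin n), (p I) ^ 2) = 1 ∧
       (∀ I : Finset (Fin n), (I ∈ 𝓜 → 0 < p I) ∧ (I ∉ 𝓜 → p I = 0))}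

/-- The moment map `μ`, sending a normalized Plücker vector to
`∑_I p_I² e_I ∈ ℝⁿ`. -/
noncomputable def momentMap (n : ℕ) (p : Finset (Fin n) → ℝ) : Fin n → ℝ :=
  fun i => ∑ I : Finset (Fin n), (if i ∈ I then (p I) ^ 2 else 0)

/-!
A point of a cell determines an orbit of the positive torus. Every point in the relative interior
of the polytope `Γ` is attained by the moment map `μ` on each orbit: minimizing a convex
exponential sum over the logarithmic weights solves the moment equations (Birch's theorem). So if
`μ` is injective on the cell, the cell is a single orbit. Conversely, if the cell is a single
orbit, its closure satisfies the binomial equations of a toric variety, and the sign pattern of a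
difference of two squared Plücker vectors with the same moment contradicts one of them; thus `μ`
is injective on the compact closure, and it is onto `Γ` since it is onto the relative interior.

For the dimensions, exchanges along `exchRel` generate the direction space of `Γ`, whose
annihilator consists of the vectors constant on components, so `dim Γ = n - c`. A single orbit is
parametrized by a complement of those vectors. If there are two orbits, a linear functional of the
logarithms of the Plücker coordinates is constant on orbits but not on the cell. The cell is
connected, since by total nonnegativity every cell deforms along chains of bridges (adding a
multiple of one column to an adjacent one) into the cell of a uniform matroid. Hence this
functional takes an interval of values and, combined with `μ`, shows that the cell has dimension
at least `n - c + 1`.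
-/

/-! ### The basis exchange property -/

section Exchange

variable {α : Type*} [DecidableEq α]

/-- The basis exchange property, `Matroid.ExchangeProperty` for a finite family of finite sets:
`𝓑` is empty or the family of bases of a matroid. -/
def IsBasisFamily (𝓑 : Finset (Finset α)) : Prop :=
  ∀ I ∈ 𝓑, ∀ J ∈ 𝓑, ∀ i ∈ I, i ∉ J → ∃ j ∈ J, j ∉ I ∧ insert j (I.erase i) ∈ 𝓑

lemma IsBasisFamily.exists_exchange_of_ne {𝓑 : Finset (Finset α)} (h𝓑 : IsBasisFamily 𝓑)
    {I J : Finset α} (hI : I ∈ 𝓑) (hJ : J ∈ 𝓑) (hne : I ≠ J) :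
    ∃ i ∈ I, i ∉ J ∧ ∃ j ∈ J, j ∉ I ∧ insert j (I.erase i) ∈ 𝓑 := by
  by_cases hsub : I ⊆ J
  · obtain ⟨j, hj, hjI⟩ := Finset.not_subset.1 fun h => hne (hsub.antisymm h)
    obtain ⟨i, hi, hiJ, -⟩ := h𝓑 J hJ I hI j hj hjI
    exact absurd (hsub hi) hiJ
  · obtain ⟨i, hi, hiJ⟩ := Finset.not_subset.1 hsub
    exact ⟨i, hi, hiJ, h𝓑 I hI J hJ i hi hiJ⟩

lemma card_insert_erase_sdiff_lt {I J : Finset α} {i j : α} (hi : i ∈ I) (hiJ : i ∉ J)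
    (hj : j ∈ J) : (insert j (I.erase i) \ J).card < (I \ J).card := by
  rw [Finset.insert_sdiff_of_mem _ hj, Finset.erase_sdiff_comm]
  exact Finset.card_erase_lt_of_mem (Finset.mem_sdiff.2 ⟨hi, hiJ⟩)

lemma exchange_induction {𝓑 : Finset (Finset α)} {J : Finset α} {motive : Finset α → Prop}
    (base : motive J)
    (step : ∀ I ∈ 𝓑, I ≠ J → ∃ i ∈ I, i ∉ J ∧ ∃ j ∈ J, insert j (I.erase i) ∈ 𝓑 ∧
      (motive (insert j (I.erase i)) → motive I)) :
    ∀ I ∈ 𝓑, motive I := by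
  intro I hI
  induction hm : (I \ J).card using Nat.strong_induction_on generalizing I with
  | _ m ih =>
    rcases eq_or_ne I J with rfl | hne
    · exact base
    obtain ⟨i, hi, hiJ, j, hj, hmem, hmotive⟩ := step I hI hne
    exact hmotive (ih _ (hm ▸ card_insert_erase_sdiff_lt hi hiJ hj) _ hmem rfl)

lemma mem_of_forall_insert_erase_mem {𝓑 : Finset (Finset α)}
    (h : ∀ I ∈ 𝓑, ∀ i ∈ I, ∀ j ∉ I, insert j (I.erase i) ∈ 𝓑) {I J : Finset α} (hI : I ∈ 𝓑)
    (hJ : J.card = I.card) : J ∈ 𝓑 := by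
  refine exchange_induction (𝓑 := (I ∪ J).powersetCard I.card) (J := J)
    (motive := fun K => K ∈ 𝓑 → J ∈ 𝓑) id (fun K hK hne => ?_) I
    (Finset.mem_powersetCard.2 ⟨Finset.subset_union_left, rfl⟩) hI
  obtain ⟨hKsub, hK⟩ := Finset.mem_powersetCard.1 hK
  obtain ⟨i, hi, hiJ⟩ := Finset.not_subset.1 fun hsub =>
    hne (Finset.eq_of_subset_of_card_le hsub (hJ.trans hK.symm).le)
  obtain ⟨j, hj, hjK⟩ := Finset.not_subset.1 fun hsub =>
    hne (Finset.eq_of_subset_of_card_le hsub (hK.trans hJ.symm).le).symm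
  refine ⟨i, hi, hiJ, j, hj, ?_, fun hmotive hK𝓑 => hmotive (h K hK𝓑 i hi j hjK)⟩
  refine Finset.mem_powersetCard.2 ⟨Finset.insert_subset (Finset.mem_union_right I hj)
    ((Finset.erase_subset i K).trans hKsub), ?_⟩
  rw [Finset.card_insert_of_notMem fun h => hjK (Finset.mem_of_mem_erase h),
    Finset.card_erase_add_one hi, hK]

lemma eq_iff_of_le_of_le {β : Type*} [PartialOrder β] {x y z : β} (hxy : x ≤ y) (hyz : y ≤ z) :
    x = z ↔ x = y ∧ y = z := by
  refine ⟨?_, fun h => h.1.trans h.2⟩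
  rintro rfl
  exact ⟨hxy.antisymm hyz, hyz.antisymm hxy⟩

section Weight

variable {M : Type*} [AddCommMonoid M] [LinearOrder M] [IsOrderedCancelAddMonoid M]
  {𝓑 : Finset (Finset α)} {pos : α → M} {J : Finset α}

/-- The exchange removes, or adds to `J`, the element of the symmetric difference at the largest
position; by minimality of `J` it is removed. -/
lemma exists_lower_exchange (hpos : Function.Injective pos) (h𝓑 : IsBasisFamily 𝓑) (hJ : J ∈ 𝓑)
    (hmin : ∀ I ∈ 𝓑, ∑ x ∈ J, pos x ≤ ∑ x ∈ I, pos x) {I : Finset α} (hI : I ∈ 𝓑) (hne : I ≠ J) :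
    ∃ i ∈ I, i ∉ J ∧ ∃ j ∈ J, j ∉ I ∧ pos j < pos i ∧ insert j (I.erase i) ∈ 𝓑 := by
  have hnonempty : (symmDiff I J).Nonempty :=
    Finset.nonempty_iff_ne_empty.2 fun h => hne (symmDiff_eq_bot.1 h)
  obtain ⟨i, hi, hmax⟩ := Finset.exists_max_image _ pos hnonempty
  have hlt {j : α} (hj : j ∈ symmDiff I J) (hji : j ≠ i) : pos j < pos i :=
    lt_of_le_of_ne (hmax j hj) (hpos.ne hji)
  rcases Finset.mem_symmDiff.1 hi with ⟨hiI, hiJ⟩ | ⟨hiJ, hiI⟩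
  · obtain ⟨j, hjJ, hjI, hj⟩ := h𝓑 I hI J hJ i hiI hiJ
    exact ⟨i, hiI, hiJ, j, hjJ, hjI, hlt (Finset.mem_symmDiff.2 (Or.inr ⟨hjJ, hjI⟩))
      (ne_of_mem_of_not_mem hjJ hiJ), hj⟩
  · obtain ⟨j, hjI, hjJ, hj⟩ := h𝓑 J hJ I hI i hiJ hiI
    have hle := hmin _ hj
    rw [Finset.sum_insert fun h => hjJ (Finset.mem_of_mem_erase h),
      ← Finset.add_sum_erase J pos hiJ, add_le_add_iff_right] at hle
    exact absurd (hlt (Finset.mem_symmDiff.2 (Or.inl ⟨hjI, hjJ⟩)) (ne_of_mem_of_not_mem hjI hiI))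
      hle.not_gt

lemma minimum_eq_iff_of_exchange {β γ : Type*} [PartialOrder β] [PartialOrder γ]
    (hpos : Function.Injective pos) (h𝓑 : IsBasisFamily 𝓑) (hJ : J ∈ 𝓑)
    (hmin : ∀ I ∈ 𝓑, ∑ x ∈ J, pos x ≤ ∑ x ∈ I, pos x) {f : Finset α → β} {g : Finset α → γ}
    (hstep : ∀ I ∈ 𝓑, ∀ i ∈ I, ∀ j, pos j < pos i → insert j (I.erase i) ∈ 𝓑 →
      f (insert j (I.erase i)) ≤ f I ∧ g (insert j (I.erase i)) ≤ g I ∧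
        (f (insert j (I.erase i)) = f I ↔ g (insert j (I.erase i)) = g I)) :
    ∀ I ∈ 𝓑, f J ≤ f I ∧ g J ≤ g I ∧ (f J = f I ↔ g J = g I) := by
  refine exchange_induction ⟨le_rfl, le_rfl, by simp⟩ fun I hI hne => ?_
  obtain ⟨i, hi, hiJ, j, hj, -, hlt, hmem⟩ := exists_lower_exchange hpos h𝓑 hJ hmin hI hne
  refine ⟨i, hi, hiJ, j, hj, hmem, fun ⟨hf, hg, hfg⟩ => ?_⟩
  obtain ⟨hf', hg', hfg'⟩ := hstep I hI i hi j hlt hmem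
  exact ⟨hf.trans hf', hg.trans hg', by
    rw [eq_iff_of_le_of_le hf hf', eq_iff_of_le_of_le hg hg', hfg, hfg']⟩

end Weight

end Exchange

/-! ### Maximal minors -/

section Minors

/-- The determinant of the columns of `A` listed by `g`, in the listed order. -/
def colDet {m ι R : Type*} [Fintype m] [DecidableEq m] [CommRing R] (A : Matrix m ι R)
    (g : m → ι) : R :=
  (A.submatrix id g).det

section CommRing

variable {m ι R : Type*} [Fintype m] [DecidableEq m] [CommRing R]

lemma colDet_comp_perm (A : Matrix m ι R) (g : m → ι) (σ : Equiv.Perm m) :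
    colDet A (g ∘ σ) = Equiv.Perm.sign σ * colDet A g :=
  Matrix.det_permute' σ (A.submatrix id g)

lemma colDet_eq_zero_of_eq (A : Matrix m ι R) {g : m → ι} {i j : m} (hij : i ≠ j)
    (h : g i = g j) : colDet A g = 0 :=
  Matrix.det_zero_of_column_eq hij fun r => by simp [h]

lemma colDet_eq_zero_of_not_injective (A : Matrix m ι R) {g : m → ι}
    (hg : ¬Function.Injective g) : colDet A g = 0 := by
  obtain ⟨i, j, hgij, hij⟩ := Function.not_injective_iff.1 hg
  exact colDet_eq_zero_of_eq A hij hgij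

lemma colDet_update (A : Matrix m ι R) (g : m → ι) (i : m) (x : ι) :
    colDet A (Function.update g i x) = (A.submatrix id g).cramer (A.col x) i := by
  rw [Matrix.cramer_apply, colDet]
  congr 1
  ext r j
  rcases eq_or_ne j i with rfl | h <;> simp [*]

/-- The Grassmann–Plücker relation exchanging one column: Cramer's rule expands the column `h j`
in the columns listed by `g`. -/
lemma colDet_mul_colDet (A : Matrix m ι R) (g h : m → ι) (j : m) :
    colDet A g * colDet A h = ∑ i, colDet A (Function.update g i (h j)) *
      colDet A (Function.update h j (g i)) := by
  have cramer_expansion : colDet A g • A.col (h j) =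
      ∑ i, (A.submatrix id g).cramer (A.col (h j)) i • A.col (g i) := by
    ext r
    rw [colDet, ← Matrix.mulVec_cramer]
    simp [Matrix.mulVec, dotProduct, mul_comm]
  have hh : colDet A h = (A.submatrix id h).cramer (A.col (h j)) j := by
    rw [← colDet_update, Function.update_eq_self]
  simp only [colDet_update]
  rw [hh, ← smul_eq_mul, ← Pi.smul_apply, ← map_smul, cramer_expansion, map_sum,
    Finset.sum_apply]
  simp

lemma colDet_updateCol [DecidableEq ι] (A : Matrix m ι R) {g : m → ι} (hg : Function.Injective g)
    (j : m) (v : m → R) :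
    colDet (A.updateCol (g j) v) g = (A.submatrix id g).cramer v j := by
  rw [Matrix.cramer_apply, colDet]
  congr 1
  ext r l
  rcases eq_or_ne l j with rfl | h <;> simp [Matrix.updateCol_ne, hg.ne, *]

lemma colDet_updateCol_add_smul [DecidableEq ι] (A : Matrix m ι R) {g : m → ι}
    (hg : Function.Injective g) (j : m) (c : R) (s : ι) :
    colDet (A.updateCol (g j) (A.col (g j) + c • A.col s)) g =
      colDet A g + c * colDet A (Function.update g j s) := by
  rw [colDet_updateCol A hg, map_add, map_smul, Pi.add_apply, Pi.smul_apply, ← colDet_update,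
    ← colDet_update, Function.update_eq_self, smul_eq_mul]

lemma colDet_updateCol_of_forall_ne [DecidableEq ι] (A : Matrix m ι R) {g : m → ι} {t : ι}
    (hg : ∀ j, g j ≠ t) (v : m → R) : colDet (A.updateCol t v) g = colDet A g := by
  rw [colDet, colDet]
  congr 1
  ext r l
  simp [Matrix.updateCol_ne (hg l)]

lemma colDet_three_term {m : ℕ} (A : Matrix (Fin (m + 2)) ι R) (g : Fin m → ι) (a b c d : ι) :
    colDet A (Fin.cons a (Fin.cons b g)) * colDet A (Fin.cons c (Fin.cons d g)) =
      colDet A (Fin.cons a (Fin.cons c g)) * colDet A (Fin.cons b (Fin.cons d g)) +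
      colDet A (Fin.cons c (Fin.cons b g)) * colDet A (Fin.cons a (Fin.cons d g)) := by
  rw [colDet_mul_colDet A _ _ 0, Fin.sum_univ_succ, Fin.sum_univ_succ, Finset.sum_eq_zero]
  · simp only [Fin.cons_zero, Fin.update_cons_zero, ← Fin.cons_update, Fin.cons_succ]
    ring
  · intro i _
    exact mul_eq_zero_of_right _ (colDet_eq_zero_of_eq A (Fin.succ_ne_zero i.succ).symm (by simp))

lemma colDet_cons_cons_swap {m : ℕ} (A : Matrix (Fin (m + 2)) ι R) (g : Fin m → ι) (a b : ι) :
    colDet A (Fin.cons a (Fin.cons b g)) = -colDet A (Fin.cons b (Fin.cons a g)) := by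
  have h : (Fin.cons b (Fin.cons a g) : Fin (m + 2) → ι) ∘ Equiv.swap 0 1 =
      Fin.cons a (Fin.cons b g) := by
    funext i
    refine Fin.cases rfl (Fin.cases rfl fun i => ?_) i
    rw [Function.comp_apply, Equiv.swap_apply_of_ne_of_ne] <;> simp [Fin.ext_iff]
  rw [← h, colDet_comp_perm, Equiv.Perm.sign_swap (by simp)]
  simp

end CommRing

section Sign

variable {k n : ℕ}

/-- The sign of `v - u`. -/
noncomputable def ordSign (u v : Fin n) : ℝ :=
  SignType.sign ((v : ℝ) - u)

lemma ordSign_sq_eq_one {u v : Fin n} (h : u ≠ v) : ordSign u v ^ 2 = 1 := by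
  have : (v : ℝ) - u ≠ 0 := sub_ne_zero.2 fun h' => h (Fin.ext (by exact_mod_cast h'.symm))
  rcases this.lt_or_gt with h | h <;> simp [ordSign, h]

lemma ordSign_of_lt {u v : Fin n} (h : u < v) : ordSign u v = 1 := by
  have : (0 : ℝ) < v - u := sub_pos.2 (by exact_mod_cast h)
  simp [ordSign, this]

lemma ordSign_of_gt {u v : Fin n} (h : v < u) : ordSign u v = -1 := by
  have : (v : ℝ) - u < 0 := sub_neg.2 (by exact_mod_cast h)
  simp [ordSign, this]

/-- The sign of the permutation sorting the listing `g`, and `0` if `g` repeats a value. -/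
noncomputable def listingSign (g : Fin k → Fin n) : ℝ :=
  ∏ i, ∏ j ∈ Finset.Ioi i, ordSign (g i) (g j)

lemma listingSign_eq_sign_vandermonde (g : Fin k → Fin n) :
    listingSign g = SignType.sign (Matrix.vandermonde fun i => ((g i : ℕ) : ℝ)).det := by
  simp only [listingSign, ordSign, Matrix.det_vandermonde, ← SignType.castHom_apply,
    ← signHom_apply, map_prod]

lemma listingSign_comp_perm (g : Fin k → Fin n) (σ : Equiv.Perm (Fin k)) :
    listingSign (g ∘ σ) = Equiv.Perm.sign σ * listingSign g := by
  have hdet : (Matrix.vandermonde fun i => (((g ∘ σ) i : ℕ) : ℝ)).det =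
      Equiv.Perm.sign σ * (Matrix.vandermonde fun i => ((g i : ℕ) : ℝ)).det :=
    Matrix.det_permute σ (Matrix.vandermonde fun i => ((g i : ℕ) : ℝ))
  rw [listingSign_eq_sign_vandermonde, hdet, sign_mul, SignType.coe_mul,
    listingSign_eq_sign_vandermonde]
  rcases Int.units_eq_one_or (Equiv.Perm.sign σ) with h | h <;> simp [h]

lemma listingSign_of_strictMono {g : Fin k → Fin n} (hg : StrictMono g) : listingSign g = 1 :=
  Finset.prod_eq_one fun _ _ => Finset.prod_eq_one fun _ hj =>
    ordSign_of_lt (hg (Finset.mem_Ioi.1 hj))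

lemma listingSign_cons (u : Fin n) (g : Fin k → Fin n) :
    listingSign (Fin.cons u g : Fin (k + 1) → Fin n) =
      (∏ j, ordSign u (g j)) * listingSign g := by
  simp [listingSign, Fin.prod_univ_succ]

end Sign

variable {k n : ℕ}

lemma minor_of_card (A : Matrix (Fin k) (Fin n) ℝ) {I : Finset (Fin n)} (h : I.card = k) :
    minor k n A I = colDet A (I.orderEmbOfFin h) := by
  rw [minor, dif_pos h]
  rfl

lemma minor_of_card_ne (A : Matrix (Fin k) (Fin n) ℝ) {I : Finset (Fin n)} (h : I.card ≠ k) :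
    minor k n A I = 0 :=
  dif_neg h

lemma minor_image_of_strictMono (A : Matrix (Fin k) (Fin n) ℝ) {g : Fin k → Fin n}
    (hg : StrictMono g) : minor k n A (Finset.univ.image g) = colDet A g := by
  have hcard : (Finset.univ.image g).card = k := by
    rw [Finset.card_image_of_injective _ hg.injective, Finset.card_fin]
  rw [minor_of_card A hcard, ← Finset.orderEmbOfFin_unique hcard (by simp) hg]

lemma minor_image (A : Matrix (Fin k) (Fin n) ℝ) (g : Fin k → Fin n) :
    minor k n A (Finset.univ.image g) = listingSign g * colDet A g := by
  by_cases hg : Function.Injective g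
  · have hmono : StrictMono (g ∘ Tuple.sort g) :=
      (Tuple.monotone_sort g).strictMono_of_injective (hg.comp (Tuple.sort g).injective)
    have himage : Finset.univ.image (g ∘ Tuple.sort g) = Finset.univ.image g := by
      rw [← Finset.image_image, Finset.image_univ_equiv]
    have hsign : (Equiv.Perm.sign (Tuple.sort g) : ℝ) = listingSign g := by
      have hone := listingSign_comp_perm g (Tuple.sort g)
      rw [listingSign_of_strictMono hmono] at hone
      rcases Int.units_eq_one_or (Equiv.Perm.sign (Tuple.sort g)) with h | h <;>
        rw [h] at hone ⊢ <;> push_cast at hone ⊢ <;> linarith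
    rw [← himage, minor_image_of_strictMono A hmono, colDet_comp_perm, hsign]
  · have hcard : (Finset.univ.image g).card ≠ k := fun h => by
      have := Finset.card_image_iff.1 (h.trans (Finset.card_fin k).symm)
      rw [Finset.coe_univ, Set.injOn_univ] at this
      exact hg this
    rw [minor_of_card_ne A hcard, colDet_eq_zero_of_not_injective A hg, mul_zero]

lemma minor_image_ne_zero_of_colDet_ne_zero {A : Matrix (Fin k) (Fin n) ℝ} {g : Fin k → Fin n}
    (h : colDet A g ≠ 0) : minor k n A (Finset.univ.image g) ≠ 0 := by
  have hg : Function.Injective g := by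
    by_contra hg
    exact h (colDet_eq_zero_of_not_injective A hg)
  rw [minor_image, listingSign]
  refine mul_ne_zero (Finset.prod_ne_zero_iff.2 fun i _ => Finset.prod_ne_zero_iff.2 fun j hj =>
    pow_ne_zero_iff two_ne_zero |>.1 ?_) h
  rw [ordSign_sq_eq_one (hg.ne (Finset.mem_Ioi.1 hj).ne)]
  exact one_ne_zero

lemma minor_insert_insert {m : ℕ} (A : Matrix (Fin (m + 2)) (Fin n) ℝ) {S : Finset (Fin n)}
    (hS : S.card = m) (u v : Fin n) :
    minor (m + 2) n A (insert u (insert v S)) =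
      (∏ i ∈ S, ordSign u i) * (∏ i ∈ S, ordSign v i) * ordSign u v *
        colDet A (Fin.cons u (Fin.cons v (S.orderEmbOfFin hS))) := by
  have himage : insert u (insert v S) =
      Finset.univ.image (Fin.cons u (Fin.cons v (S.orderEmbOfFin hS)) : Fin (m + 2) → Fin n) := by
    rw [← Finset.coe_inj]
    simp [Fin.range_cons]
  have hprod (w : Fin n) : ∏ j, ordSign w (S.orderEmbOfFin hS j) = ∏ i ∈ S, ordSign w i := by
    conv_rhs => rw [← Finset.image_orderEmbOfFin_univ S hS]
    exact (Finset.prod_image (S.orderEmbOfFin hS).injective.injOn).symm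
  rw [himage, minor_image, listingSign_cons, listingSign_cons,
    listingSign_of_strictMono (S.orderEmbOfFin hS).strictMono, Fin.prod_univ_succ]
  simp only [Fin.cons_zero, Fin.cons_succ, hprod]
  ring

end Minors

/-! ### Plücker vectors -/

section Pluecker

lemma image_update_of_injective {α β : Type*} [Fintype α] [DecidableEq α] [DecidableEq β]
    {f : α → β} (hf : Function.Injective f) (a : α) (b : β) :
    Finset.univ.image (Function.update f a b) = insert b ((Finset.univ.image f).erase (f a)) := by
  rw [← Finset.image_erase hf, ← Finset.insert_erase (Finset.mem_univ a), Finset.image_insert,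
    Function.update_self, Finset.erase_insert (Finset.notMem_erase a _)]
  congr 1
  exact Finset.image_congr fun x hx => Function.update_of_ne (Finset.ne_of_mem_erase hx) _ _

variable {k n : ℕ}

/-- `p` is a multiple of the vector of maximal minors of a `k × n` matrix. For `0 < k` the factor
can be absorbed in the matrix; keeping it makes the notion homogeneous for `k = 0` as well. -/
def IsPlueckerVector (k n : ℕ) (p : Finset (Fin n) → ℝ) : Prop :=
  ∃ (c : ℝ) (A : Matrix (Fin k) (Fin n) ℝ), ∀ I, p I = c * minor k n A I

namespace IsPlueckerVector

variable {p : Finset (Fin n) → ℝ}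

lemma smul (hp : IsPlueckerVector k n p) (c : ℝ) : IsPlueckerVector k n (c • p) := by
  obtain ⟨d, A, hA⟩ := hp
  exact ⟨c * d, A, fun I => by rw [Pi.smul_apply, hA, smul_eq_mul, mul_assoc]⟩

lemma card_eq (hp : IsPlueckerVector k n p) {I : Finset (Fin n)} (hI : p I ≠ 0) : I.card = k := by
  obtain ⟨c, A, hA⟩ := hp
  by_contra h
  exact hI (by rw [hA, minor_of_card_ne A h, mul_zero])

lemma exchange (hp : IsPlueckerVector k n p) {I J : Finset (Fin n)} (hI : p I ≠ 0) (hJ : p J ≠ 0)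
    {i : Fin n} (hi : i ∈ I) (hiJ : i ∉ J) : ∃ j ∈ J, j ∉ I ∧ p (insert j (I.erase i)) ≠ 0 := by
  have hcI := hp.card_eq hI
  have hcJ := hp.card_eq hJ
  obtain ⟨c, A, hA⟩ := hp
  simp only [hA, ne_eq, mul_eq_zero, not_or] at hI hJ ⊢
  rw [minor_of_card A hcI] at hI
  rw [minor_of_card A hcJ] at hJ
  set f := I.orderEmbOfFin hcI
  set g := J.orderEmbOfFin hcJ
  obtain ⟨a, rfl⟩ : i ∈ Set.range f := by rwa [Finset.range_orderEmbOfFin]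
  obtain ⟨b, -, hb⟩ := Finset.exists_ne_zero_of_sum_ne_zero
    (colDet_mul_colDet A g f a ▸ mul_ne_zero hJ.2 hI.2)
  have hfb : colDet A (Function.update f a (g b)) ≠ 0 := right_ne_zero_of_mul hb
  refine ⟨g b, J.orderEmbOfFin_mem hcJ b, fun hgI => hfb ?_, hI.1, ?_⟩
  · obtain ⟨l, hl⟩ : g b ∈ Set.range f := by rwa [Finset.range_orderEmbOfFin]
    have hla : l ≠ a := by
      rintro rfl
      exact hiJ (hl ▸ J.orderEmbOfFin_mem hcJ b)
    exact colDet_eq_zero_of_eq A hla (by simp [hla, hl])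
  · have := minor_image_ne_zero_of_colDet_ne_zero hfb
    rwa [image_update_of_injective f.injective, Finset.image_orderEmbOfFin_univ] at this

/-- The three-term relation, with its signs evaluated when `s` and `t` lie on the same side of
`a` and on the same side of `b`. -/
lemma three_term (hp : IsPlueckerVector k n p) {S : Finset (Fin n)} {a b s t : Fin n}
    (hk : S.card + 2 = k) (hab : a ≠ b) (hst : s ≠ t) (ha : ordSign a t = ordSign a s)
    (hb : ordSign b t = ordSign b s) :
    p (insert s (insert a S)) * p (insert t (insert b S)) -
      p (insert t (insert a S)) * p (insert s (insert b S)) =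
    ordSign a s * ordSign b s * ordSign a b * ordSign s t *
      (p (insert a (insert b S)) * p (insert s (insert t S))) := by
  obtain ⟨c, A, hA⟩ := hp
  subst hk
  rw [Finset.insert_comm s a, Finset.insert_comm t b, Finset.insert_comm t a,
    Finset.insert_comm s b]
  simp only [hA, minor_insert_insert A rfl, ha, hb]
  have relation := colDet_three_term A (S.orderEmbOfFin rfl) a b s t
  rw [colDet_cons_cons_swap A _ s b] at relation
  set χ : ℝ := (∏ i ∈ S, ordSign a i) * (∏ i ∈ S, ordSign b i) * (∏ i ∈ S, ordSign s i) *
    (∏ i ∈ S, ordSign t i) * ordSign a s * ordSign b s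
  linear_combination (-c ^ 2 * χ) * relation -
    c ^ 2 * χ * colDet A (Fin.cons a (Fin.cons b (S.orderEmbOfFin rfl))) *
      colDet A (Fin.cons s (Fin.cons t (S.orderEmbOfFin rfl))) *
      (ordSign s t ^ 2 * ordSign_sq_eq_one hab + ordSign_sq_eq_one hst)

lemma torus (hp : IsPlueckerVector k n p) (w : Fin n → ℝ) :
    IsPlueckerVector k n fun I => (∏ i ∈ I, w i) * p I := by
  obtain ⟨c, A, hA⟩ := hp
  refine ⟨c, Matrix.of fun i j => w j * A i j, fun I => ?_⟩
  change (∏ i ∈ I, w i) * p I = _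
  rw [hA, mul_left_comm]
  congr 1
  by_cases hI : I.card = k
  · have hprod : ∏ i ∈ I, w i = ∏ j, w (I.orderEmbOfFin hI j) := by
      conv_lhs => rw [← Finset.image_orderEmbOfFin_univ I hI]
      exact Finset.prod_image (I.orderEmbOfFin hI).injective.injOn
    rw [minor_of_card _ hI, minor_of_card _ hI, hprod]
    exact (Matrix.det_mul_row (fun j => w (I.orderEmbOfFin hI j)) _).symm
  · rw [minor_of_card_ne _ hI, minor_of_card_ne _ hI, mul_zero]

end IsPlueckerVector

/-- The columns `s` and `t` are neighbours in the linear order on `Fin n`; the cyclic adjacency of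
the first and the last column is not included. -/
def AdjCols (s t : Fin n) : Prop :=
  s.val + 1 = t.val ∨ t.val + 1 = s.val

namespace AdjCols

variable {s t : Fin n}

lemma ne (h : AdjCols s t) : s ≠ t := by
  rintro rfl
  rcases h with h | h <;> omega

lemma lt_iff (h : AdjCols s t) {x : Fin n} (hs : x ≠ s) (ht : x ≠ t) : x < s ↔ x < t := by
  simp only [Fin.lt_def, ne_eq, Fin.ext_iff] at hs ht ⊢
  rcases h with h | h <;> omega

lemma strictMonoOn_swap (h : AdjCols s t) : StrictMonoOn (Equiv.swap s t) {s}ᶜ := by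
  intro x hx y hy hxy
  simp only [Set.mem_compl_iff, Set.mem_singleton_iff] at hx hy
  simp only [Equiv.swap_apply_def, Fin.lt_def, Fin.ext_iff] at *
  rcases h with h | h <;> split_ifs <;> omega

end AdjCols

/-- The effect on Plücker vectors of adding `c` times column `s` to the adjacent column `t`. -/
noncomputable def bridge (s t : Fin n) (c : ℝ) (p : Finset (Fin n) → ℝ) : Finset (Fin n) → ℝ :=
  fun I => p I + if t ∈ I ∧ s ∉ I then c * p (insert s (I.erase t)) else 0

lemma colDet_update_orderEmbOfFin (A : Matrix (Fin k) (Fin n) ℝ) {s t : Fin n}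
    (hst : AdjCols s t) {I : Finset (Fin n)} (hI : I.card = k) {j : Fin k}
    (hj : I.orderEmbOfFin hI j = t) :
    colDet A (Function.update (I.orderEmbOfFin hI) j s) =
      if s ∉ I then minor k n A (insert s (I.erase t)) else 0 := by
  subst hj
  set g := I.orderEmbOfFin hI
  by_cases hs : s ∈ I
  · obtain ⟨l, hl⟩ : s ∈ Set.range g := by rwa [Finset.range_orderEmbOfFin]
    have hlj : l ≠ j := by
      rintro rfl
      exact hst.ne hl.symm
    rw [if_neg (not_not.2 hs)]
    exact colDet_eq_zero_of_eq A hlj (by simp [hlj, hl])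
  · have hgs (l : Fin k) : g l ≠ s := fun h => hs (h ▸ I.orderEmbOfFin_mem hI l)
    have hswap : Function.update g j s = Equiv.swap s (g j) ∘ g := by
      funext l
      rcases eq_or_ne l j with rfl | hl
      · simp
      · simp [hl, Equiv.swap_apply_of_ne_of_ne (hgs l) (g.injective.ne hl)]
    have hmono : StrictMono (Function.update g j s) := by
      rw [hswap]
      exact fun a b hab => hst.strictMonoOn_swap (hgs a) (hgs b) (g.strictMono hab)
    rw [if_pos hs, ← minor_image_of_strictMono A hmono, image_update_of_injective g.injective,
      Finset.image_orderEmbOfFin_univ]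

lemma isPlueckerVector_bridge {p : Finset (Fin n) → ℝ} (hp : IsPlueckerVector k n p)
    {s t : Fin n} (hst : AdjCols s t) (c : ℝ) : IsPlueckerVector k n (bridge s t c p) := by
  obtain ⟨d, A, hA⟩ := hp
  refine ⟨d, A.updateCol t (A.col t + c • A.col s), fun I => ?_⟩
  suffices minor k n (A.updateCol t (A.col t + c • A.col s)) I =
      bridge s t c (minor k n A) I by
    rw [this, bridge, bridge, mul_add, mul_ite, mul_zero, mul_left_comm, hA, hA]
  by_cases hI : I.card = k
  · set g := I.orderEmbOfFin hI
    by_cases ht : t ∈ I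
    · obtain ⟨j, hj⟩ : t ∈ Set.range g := by rwa [Finset.range_orderEmbOfFin]
      have key := colDet_updateCol_add_smul A g.injective j c s
      rw [hj, colDet_update_orderEmbOfFin A hst hI hj, mul_ite, mul_zero] at key
      simpa only [bridge, minor_of_card _ hI, ht, true_and] using key
    · have hgt (j : Fin k) : g j ≠ t := fun h => ht (h ▸ I.orderEmbOfFin_mem hI j)
      rw [bridge, if_neg fun h => ht h.1, add_zero, minor_of_card _ hI, minor_of_card _ hI,
        colDet_updateCol_of_forall_ne A hgt]
  · rw [bridge, minor_of_card_ne _ hI, minor_of_card_ne _ hI, zero_add]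
    refine (ite_eq_right_iff.2 fun h => ?_).symm
    rw [minor_of_card_ne _, mul_zero]
    rwa [Finset.card_insert_of_notMem fun h' => h.2 (Finset.mem_of_mem_erase h'),
      Finset.card_erase_add_one h.1]

end Pluecker

/-! ### Bridges between positroid cells -/

section Bridge

variable {n k : ℕ} {𝓜 : Finset (Finset (Fin n))} {p : Finset (Fin n) → ℝ}

/-- The cone over a positroid cell: the nonnegative Plücker vectors with support `𝓜`. -/
def positroidCone (n k : ℕ) (𝓜 : Finset (Finset (Fin n))) : Set (Finset (Fin n) → ℝ) :=
  {p | IsPlueckerVector k n p ∧ (∀ I, 0 ≤ p I) ∧ ∀ I, p I ≠ 0 ↔ I ∈ 𝓜}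

lemma pos_of_mem_positroidCone (hp : p ∈ positroidCone n k 𝓜) {I : Finset (Fin n)} (hI : I ∈ 𝓜) :
    0 < p I :=
  (hp.2.1 I).lt_of_ne' ((hp.2.2 I).2 hI)

lemma eq_zero_of_mem_positroidCone (hp : p ∈ positroidCone n k 𝓜) {I : Finset (Fin n)}
    (hI : I ∉ 𝓜) : p I = 0 :=
  not_not.1 fun h => hI ((hp.2.2 I).1 h)

lemma card_eq_of_mem_positroidCone (hp : p ∈ positroidCone n k 𝓜) {I : Finset (Fin n)}
    (hI : I ∈ 𝓜) : I.card = k :=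
  hp.1.card_eq ((hp.2.2 I).2 hI)

lemma isBasisFamily_of_mem_positroidCone (hp : p ∈ positroidCone n k 𝓜) : IsBasisFamily 𝓜 := by
  intro I hI J hJ i hi hiJ
  obtain ⟨j, hj, hjI, h⟩ := hp.1.exchange ((hp.2.2 I).2 hI) ((hp.2.2 J).2 hJ) hi hiJ
  exact ⟨j, hj, hjI, (hp.2.2 _).1 h⟩

lemma smul_mem_positroidCone (hp : p ∈ positroidCone n k 𝓜) {c : ℝ} (hc : 0 < c) :
    c • p ∈ positroidCone n k 𝓜 := by
  refine ⟨hp.1.smul c, fun I => mul_nonneg hc.le (hp.2.1 I), fun I => ?_⟩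
  rw [Pi.smul_apply, smul_eq_mul, mul_ne_zero_iff, hp.2.2]
  exact and_iff_right hc.ne'

/-- The position of `x` in the cyclic order of the columns that starts with `t`, moves away from the
adjacent column `s`, and so ends with `s`. -/
def cycPos (s t x : Fin n) : ℤ :=
  if s < t then (if s < x then x else x + n) else (if x < s then -x else n - x)

lemma cycPos_injective (s t : Fin n) : Function.Injective (cycPos s t) := by
  intro x y h
  have := x.2
  have := y.2
  unfold cycPos at h
  ext
  split_ifs at h <;> simp only [Fin.lt_def] at * <;> omega

lemma ordSign_mul_of_cycPos_lt {s t a b : Fin n} (hst : AdjCols s t) (has : a ≠ s) (hbs : b ≠ s)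
    (h : cycPos s t a < cycPos s t b) :
    ordSign a s * ordSign b s * ordSign a b * ordSign s t = 1 := by
  have hab : a ≠ b := by
    rintro rfl
    exact h.false
  have := a.2
  have := b.2
  unfold cycPos at h
  rcases has.lt_or_gt with ha | ha <;> rcases hbs.lt_or_gt with hb | hb <;>
    rcases hab.lt_or_gt with hab | hab <;> rcases hst.ne.lt_or_gt with hst | hst <;>
    simp only [ha, hb, hst, hab, ha.not_gt, hb.not_gt, hst.not_gt, if_true, if_false,
      ordSign_of_lt, ordSign_of_gt] at h ⊢ <;>
    simp only [Fin.lt_def] at ha hb hab <;> first | omega | norm_num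

lemma AdjCols.ordSign_eq {s t x : Fin n} (hst : AdjCols s t) (hs : x ≠ s) (ht : x ≠ t) :
    ordSign x t = ordSign x s := by
  rcases hs.lt_or_gt with h | h
  · rw [ordSign_of_lt h, ordSign_of_lt ((hst.lt_iff hs ht).1 h)]
  · rw [ordSign_of_gt h, ordSign_of_gt (ht.lt_or_gt.resolve_left fun h' =>
      h.not_gt ((hst.lt_iff hs ht).2 h'))]

/-- The bases after adding a generic multiple of column `s` to column `t`. -/
def bridgeBases (s t : Fin n) (𝓜 : Finset (Finset (Fin n))) : Finset (Finset (Fin n)) :=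
  Finset.univ.filter fun I => I ∈ 𝓜 ∨ (t ∈ I ∧ s ∉ I) ∧ insert s (I.erase t) ∈ 𝓜

/-- The bases, avoiding `t`, of the contraction of the matroid with bases `𝓜` by `s`. -/
def linkBases (s t : Fin n) (𝓜 : Finset (Finset (Fin n))) : Finset (Finset (Fin n)) :=
  Finset.univ.filter fun I => s ∉ I ∧ t ∉ I ∧ insert s I ∈ 𝓜

/-- The ratio in which a bridge changes: adding `c` times column `s` to column `t` adds `c` to
each ratio of the coordinates of `I ∪ {t}` and `I ∪ {s}`. -/
noncomputable def bridgeRatio (s t : Fin n) (p : Finset (Fin n) → ℝ) (I : Finset (Fin n)) : ℝ :=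
  p (insert t I) / p (insert s I)

variable {s t : Fin n} {I J : Finset (Fin n)}

lemma mem_bridgeBases :
    I ∈ bridgeBases s t 𝓜 ↔ I ∈ 𝓜 ∨ (t ∈ I ∧ s ∉ I) ∧ insert s (I.erase t) ∈ 𝓜 := by
  simp [bridgeBases]

lemma mem_linkBases : I ∈ linkBases s t 𝓜 ↔ s ∉ I ∧ t ∉ I ∧ insert s I ∈ 𝓜 := by
  simp [linkBases]

lemma subset_bridgeBases : 𝓜 ⊆ bridgeBases s t 𝓜 :=
  fun _ hI => mem_bridgeBases.2 (Or.inl hI)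

lemma linkBases_bridgeBases : linkBases s t (bridgeBases s t 𝓜) = linkBases s t 𝓜 := by
  ext I
  simp [mem_linkBases, mem_bridgeBases]

lemma insert_mem_bridgeBases (hst : AdjCols s t) (hI : I ∈ linkBases s t 𝓜) :
    insert t I ∈ bridgeBases s t 𝓜 := by
  obtain ⟨hs, ht, hmem⟩ := mem_linkBases.1 hI
  rw [mem_bridgeBases, Finset.erase_insert ht]
  exact Or.inr ⟨⟨Finset.mem_insert_self t I, by simp [hst.ne, hs]⟩, hmem⟩

lemma IsBasisFamily.linkBases (h : IsBasisFamily 𝓜) (s t : Fin n) :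
    IsBasisFamily (linkBases s t 𝓜) := by
  intro I hI J hJ i hi hiJ
  rw [mem_linkBases] at hI hJ
  have his : i ≠ s := ne_of_mem_of_not_mem hi hI.1
  obtain ⟨j, hj, hjI, hmem⟩ := h _ hI.2.2 _ hJ.2.2 i (Finset.mem_insert_of_mem hi)
    (by simp [his, hiJ])
  simp only [Finset.mem_insert, not_or] at hj hjI
  have hjJ : j ∈ J := hj.resolve_left hjI.1
  rw [Finset.erase_insert_of_ne his.symm, Finset.insert_comm] at hmem
  have htj : t ≠ j := (ne_of_mem_of_not_mem hjJ hJ.2.1).symm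
  exact ⟨j, hjJ, hjI.2, mem_linkBases.2 ⟨by simp [Ne.symm hjI.1, hI.1], by simp [htj, hI.2.1],
    hmem⟩⟩

lemma bridge_mem_positroidCone (hp : p ∈ positroidCone n k 𝓜) (hst : AdjCols s t) {c : ℝ}
    (hc : 0 < c) : bridge s t c p ∈ positroidCone n k (bridgeBases s t 𝓜) := by
  have hnonneg (I : Finset (Fin n)) :
      0 ≤ if t ∈ I ∧ s ∉ I then c * p (insert s (I.erase t)) else 0 :=
    ite_nonneg (mul_nonneg hc.le (hp.2.1 _)) le_rfl
  refine ⟨isPlueckerVector_bridge hp.1 hst c, fun I => add_nonneg (hp.2.1 I) (hnonneg I),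
    fun I => ?_⟩
  rw [bridge, Ne, add_eq_zero_iff_of_nonneg (hp.2.1 I) (hnonneg I), not_and_or, mem_bridgeBases,
    ← hp.2.2, ← hp.2.2]
  simp [hc.ne', and_assoc]

lemma bridge_bridge_neg (c : ℝ) (p : Finset (Fin n) → ℝ) :
    bridge s t c (bridge s t (-c) p) = p := by
  ext I
  by_cases h : t ∈ I ∧ s ∉ I <;> simp [bridge, h]

lemma continuous_bridge (s t : Fin n) :
    Continuous fun x : ℝ × (Finset (Fin n) → ℝ) => bridge s t x.1 x.2 := by
  refine continuous_pi fun I => ?_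
  by_cases h : t ∈ I ∧ s ∉ I
  · simp only [bridge, if_pos h]
    fun_prop
  · simp only [bridge, if_neg h]
    fun_prop

lemma bridgeRatio_bridge (hp : p ∈ positroidCone n k 𝓜) (hst : AdjCols s t)
    (hI : I ∈ linkBases s t 𝓜) (c : ℝ) :
    bridgeRatio s t (bridge s t c p) I = bridgeRatio s t p I + c := by
  obtain ⟨hs, ht, hmem⟩ := mem_linkBases.1 hI
  have hne : p (insert s I) ≠ 0 := (hp.2.2 _).2 hmem
  simp [bridgeRatio, bridge, hst.ne, hs, ht, add_div, hne]

lemma bridgeRatio_eq_zero_iff (hp : p ∈ positroidCone n k 𝓜) (hI : I ∈ linkBases s t 𝓜) :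
    bridgeRatio s t p I = 0 ↔ insert t I ∉ 𝓜 := by
  rw [bridgeRatio, div_eq_zero_iff, or_iff_left ((hp.2.2 _).2 (mem_linkBases.1 hI).2.2),
    ← hp.2.2, not_not]

lemma bridgeRatio_nonneg (hp : p ∈ positroidCone n k 𝓜) : 0 ≤ bridgeRatio s t p I :=
  div_nonneg (hp.2.1 _) (hp.2.1 _)

lemma bridgeRatio_exchange (hp : p ∈ positroidCone n k 𝓜) (hst : AdjCols s t) {i j : Fin n}
    (hI : I ∈ linkBases s t 𝓜) (hi : i ∈ I) (hlt : cycPos s t j < cycPos s t i)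
    (hI' : insert j (I.erase i) ∈ linkBases s t 𝓜) :
    bridgeRatio s t p (insert j (I.erase i)) ≤ bridgeRatio s t p I ∧
      (bridgeRatio s t p (insert j (I.erase i)) = bridgeRatio s t p I ↔
        ¬(insert j I ∈ 𝓜 ∧ insert s (insert t (I.erase i)) ∈ 𝓜)) := by
  obtain ⟨hs, ht, hmem⟩ := mem_linkBases.1 hI
  obtain ⟨hs', ht', hmem'⟩ := mem_linkBases.1 hI'
  simp only [Finset.mem_insert, not_or] at hs' ht'
  have hk : (I.erase i).card + 2 = k := by
    rw [← card_eq_of_mem_positroidCone hp hmem, Finset.card_insert_of_notMem hs,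
      ← Finset.card_erase_add_one hi]
  have hji : j ≠ i := by
    rintro rfl
    exact hlt.false
  have his : i ≠ s := ne_of_mem_of_not_mem hi hs
  have relation := hp.1.three_term hk hji hst.ne (hst.ordSign_eq (Ne.symm hs'.1) (Ne.symm ht'.1))
    (hst.ordSign_eq his (ne_of_mem_of_not_mem hi ht))
  rw [ordSign_mul_of_cycPos_lt hst (Ne.symm hs'.1) his hlt, one_mul, Finset.insert_erase hi]
    at relation
  have hpos := pos_of_mem_positroidCone hp hmem
  have hpos' := pos_of_mem_positroidCone hp hmem'
  have hnonneg := mul_nonneg (hp.2.1 (insert j I)) (hp.2.1 (insert s (insert t (I.erase i))))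
  simp only [bridgeRatio]
  rw [div_le_div_iff₀ hpos' hpos, div_eq_div_iff hpos'.ne' hpos.ne', ← hp.2.2, ← hp.2.2,
    ← mul_ne_zero_iff, not_not]
  exact ⟨by linarith, by constructor <;> intro h <;> linarith⟩

lemma exists_bridgeRatio_minimizer (h𝓜 : IsBasisFamily 𝓜) (hst : AdjCols s t)
    (hne : (linkBases s t 𝓜).Nonempty) :
    ∃ J ∈ linkBases s t 𝓜, ∀ p ∈ positroidCone n k 𝓜, ∀ q ∈ positroidCone n k 𝓜,
      ∀ I ∈ linkBases s t 𝓜, bridgeRatio s t p J ≤ bridgeRatio s t p I ∧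
        (bridgeRatio s t p J = bridgeRatio s t p I ↔
          bridgeRatio s t q J = bridgeRatio s t q I) := by
  obtain ⟨J, hJ, hmin⟩ :=
    Finset.exists_min_image (linkBases s t 𝓜) (fun I => ∑ x ∈ I, cycPos s t x) hne
  refine ⟨J, hJ, fun p hp q hq I hI => ?_⟩
  have hmono := minimum_eq_iff_of_exchange (f := bridgeRatio s t p) (g := bridgeRatio s t q)
    (cycPos_injective s t) (h𝓜.linkBases s t) hJ hmin (fun I hI i hi j hlt hI' => ?_) I hI
  · exact ⟨hmono.1, hmono.2.2⟩
  · obtain ⟨hple, hpeq⟩ := bridgeRatio_exchange hp hst hI hi hlt hI'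
    obtain ⟨hqle, hqeq⟩ := bridgeRatio_exchange hq hst hI hi hlt hI'
    exact ⟨hple, hqle, hpeq.trans hqeq.symm⟩

lemma bridge_neg_mem_positroidCone {q : Finset (Fin n) → ℝ} {ρ : ℝ} (hst : AdjCols s t)
    (hq : q ∈ positroidCone n k (bridgeBases s t 𝓜))
    (hle : ∀ I ∈ linkBases s t 𝓜, ρ ≤ bridgeRatio s t q I)
    (heq : ∀ I ∈ linkBases s t 𝓜, ρ = bridgeRatio s t q I ↔ insert t I ∉ 𝓜) :
    bridge s t (-ρ) q ∈ positroidCone n k 𝓜 := by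
  refine ⟨isPlueckerVector_bridge hq.1 hst _, ?_⟩
  rw [← forall_and]
  intro L
  by_cases hL : (t ∈ L ∧ s ∉ L) ∧ insert s (L.erase t) ∈ 𝓜
  · have hlink : L.erase t ∈ linkBases s t 𝓜 := mem_linkBases.2 ⟨by simp [hL.1.2], by simp, hL.2⟩
    have hpos := pos_of_mem_positroidCone hq (subset_bridgeBases hL.2)
    have hvalue : bridge s t (-ρ) q L =
        (bridgeRatio s t q (L.erase t) - ρ) * q (insert s (L.erase t)) := by
      rw [bridge, if_pos hL.1, bridgeRatio, Finset.insert_erase hL.1.1]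
      field_simp
      ring
    rw [hvalue]
    refine ⟨mul_nonneg (sub_nonneg.2 (hle _ hlink)) hpos.le, ?_⟩
    have := heq _ hlink
    rw [Finset.insert_erase hL.1.1] at this
    rw [mul_ne_zero_iff, and_iff_left hpos.ne', sub_ne_zero, ne_comm, Ne, this, not_not]
  · have hvalue : bridge s t (-ρ) q L = q L := by
      rw [bridge, add_eq_left, ite_eq_right_iff]
      intro hts
      rw [eq_zero_of_mem_positroidCone hq, mul_zero]
      simpa [mem_bridgeBases] using fun h => hL ⟨hts, h⟩
    rw [hvalue, hq.2.2, mem_bridgeBases, or_iff_left hL]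
    exact ⟨hq.2.1 L, Iff.rfl⟩

/-- The amount added by a bridge can be read off continuously from the result: it is the ratio at
the minimizer, where the ratio vanishes before the bridge. -/
lemma exists_bridge_coordinate (hne : (positroidCone n k 𝓜).Nonempty) (hst : AdjCols s t)
    (hlt : 𝓜 ⊂ bridgeBases s t 𝓜) :
    ∃ ρ : (Finset (Fin n) → ℝ) → ℝ,
      ContinuousOn ρ (positroidCone n k (bridgeBases s t 𝓜)) ∧
      (∀ q ∈ positroidCone n k (bridgeBases s t 𝓜),
        0 < ρ q ∧ bridge s t (-ρ q) q ∈ positroidCone n k 𝓜) ∧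
      ∀ p ∈ positroidCone n k 𝓜, ∀ c, ρ (bridge s t c p) = c := by
  obtain ⟨p, hp⟩ := hne
  have hbridge := bridge_mem_positroidCone hp hst one_pos
  obtain ⟨K, hK, hK𝓜⟩ := Finset.exists_of_ssubset hlt
  obtain ⟨⟨hKt, hKs⟩, hK'⟩ := (mem_bridgeBases.1 hK).resolve_left hK𝓜
  have hKlink : K.erase t ∈ linkBases s t 𝓜 := mem_linkBases.2 ⟨by simp [hKs], by simp, hK'⟩
  obtain ⟨J, hJ, hmin⟩ := exists_bridgeRatio_minimizer (k := k)
    (isBasisFamily_of_mem_positroidCone hbridge) hst (by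
      rw [linkBases_bridgeBases]
      exact ⟨_, hKlink⟩)
  rw [linkBases_bridgeBases] at hJ hmin
  have hratio {I : Finset (Fin n)} (hI : I ∈ linkBases s t 𝓜) :
      bridgeRatio s t (bridge s t 1 p) I = bridgeRatio s t p I + 1 :=
    bridgeRatio_bridge hp hst hI 1
  have hpJ : bridgeRatio s t p J = 0 := by
    have hpK : bridgeRatio s t p (K.erase t) = 0 := by
      rw [bridgeRatio_eq_zero_iff hp hKlink, Finset.insert_erase hKt]
      exact hK𝓜
    have hle := (hmin _ hbridge _ hbridge _ hKlink).1
    rw [hratio hJ, hratio hKlink, hpK] at hle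
    exact le_antisymm (by linarith) (bridgeRatio_nonneg hp)
  refine ⟨fun q => bridgeRatio s t q J, ?_, fun q hq => ⟨?_, ?_⟩, fun q hq c => ?_⟩
  · refine (continuous_apply _).continuousOn.div (continuous_apply _).continuousOn fun q hq => ?_
    exact (hq.2.2 _).2 (subset_bridgeBases (mem_linkBases.1 hJ).2.2)
  · exact div_pos (pos_of_mem_positroidCone hq (insert_mem_bridgeBases hst hJ))
      (pos_of_mem_positroidCone hq (subset_bridgeBases (mem_linkBases.1 hJ).2.2))
  · refine bridge_neg_mem_positroidCone hst hq (fun I hI => (hmin q hq q hq I hI).1)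
      fun I hI => ?_
    rw [(hmin q hq _ hbridge I hI).2, hratio hJ, hratio hI, hpJ, add_left_inj, eq_comm,
      bridgeRatio_eq_zero_iff hp hI]
  · have hqJ : bridgeRatio s t q J = 0 := by
      rw [bridgeRatio_eq_zero_iff hq hJ, ← bridgeRatio_eq_zero_iff hp hJ, hpJ]
    dsimp only
    rw [bridgeRatio_bridge hq hst hJ, hqJ, zero_add]

lemma isPreconnected_positroidCone_bridgeBases_iff (hne : (positroidCone n k 𝓜).Nonempty)
    (hst : AdjCols s t) (hlt : 𝓜 ⊂ bridgeBases s t 𝓜) :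
    IsPreconnected (positroidCone n k (bridgeBases s t 𝓜)) ↔
      IsPreconnected (positroidCone n k 𝓜) := by
  obtain ⟨ρ, hcont, hρ, hρbridge⟩ := exists_bridge_coordinate hne hst hlt
  constructor <;> intro hconn
  · have himage : positroidCone n k 𝓜 =
        (fun q => bridge s t (-ρ q) q) '' positroidCone n k (bridgeBases s t 𝓜) := by
      refine subset_antisymm (fun p hp => ?_) (Set.image_subset_iff.2 fun q hq => (hρ q hq).2)
      refine ⟨_, bridge_mem_positroidCone hp hst one_pos, ?_⟩
      dsimp only
      rw [hρbridge p hp]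
      simpa only [neg_neg] using bridge_bridge_neg (s := s) (t := t) (-1) p
    rw [himage]
    exact hconn.image _
      ((continuous_bridge s t).comp_continuousOn (hcont.neg.prodMk continuousOn_id))
  · have himage : positroidCone n k (bridgeBases s t 𝓜) =
        (fun x : ℝ × (Finset (Fin n) → ℝ) => bridge s t x.1 x.2) ''
          (Set.Ioi 0 ×ˢ positroidCone n k 𝓜) := by
      refine subset_antisymm (fun q hq => ?_) (Set.image_subset_iff.2 fun x hx =>
        bridge_mem_positroidCone hx.2 hst hx.1)
      exact ⟨(ρ q, _), hρ q hq, bridge_bridge_neg _ _⟩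
    rw [himage]
    exact (isPreconnected_Ioi.prod hconn).image _ (continuous_bridge s t).continuousOn

end Bridge

/-! ### Connectedness of cells -/

section Connectedness

variable {k n : ℕ} {𝓜 : Finset (Finset (Fin n))} {p : Finset (Fin n) → ℝ}

/-- A move from `s` to `t` splits at any column `z` strictly between them; if `z` is occupied, its
occupant moves first. -/
lemma insert_erase_mem_of_adjCols
    (h : ∀ I ∈ 𝓜, ∀ s ∈ I, ∀ t ∉ I, AdjCols s t → insert t (I.erase s) ∈ 𝓜) :
    ∀ I ∈ 𝓜, ∀ s ∈ I, ∀ t ∉ I, insert t (I.erase s) ∈ 𝓜 := by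
  intro I hI s hs t ht
  induction hd : ((s : ℤ) - t).natAbs using Nat.strong_induction_on generalizing I s t with
  | _ d ih =>
    have hst : s ≠ t := ne_of_mem_of_not_mem hs ht
    by_cases hadj : AdjCols s t
    · exact h I hI s hs t ht hadj
    obtain ⟨z, hzs, hzt, hsz, hzt'⟩ : ∃ z : Fin n, z ≠ s ∧ z ≠ t ∧
        ((s : ℤ) - z).natAbs < d ∧ ((z : ℤ) - t).natAbs < d := by
      simp only [AdjCols, not_or, ne_eq, Fin.ext_iff] at hadj hst ⊢
      have := s.2
      have := t.2
      rcases Nat.lt_or_gt_of_ne hst with hlt | hlt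
      · exact ⟨⟨s + 1, by omega⟩, by simp only; omega⟩
      · exact ⟨⟨t + 1, by omega⟩, by simp only; omega⟩
    by_cases hz : z ∈ I
    · have hmem := ih _ hsz _ (ih _ hzt' I hI z hz t ht rfl) s (by simp [hs, hzs.symm])
        z (by simp [hzt]) rfl
      convert hmem using 1
      ext x
      simp only [Finset.mem_insert, Finset.mem_erase]
      grind
    · have hmem := ih _ hzt' _ (ih _ hsz I hI s hs z hz rfl) z (by simp)
        t (by simp [ht, hzt.symm]) rfl
      convert hmem using 1
      ext x
      simp only [Finset.mem_insert, Finset.mem_erase]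
      grind

lemma eq_powersetCard_of_adjCols (hne : 𝓜.Nonempty) (hcard : ∀ I ∈ 𝓜, I.card = k)
    (h : ∀ I ∈ 𝓜, ∀ s ∈ I, ∀ t ∉ I, AdjCols s t → insert t (I.erase s) ∈ 𝓜) :
    𝓜 = Finset.univ.powersetCard k := by
  obtain ⟨I, hI⟩ := hne
  ext L
  rw [Finset.mem_powersetCard_univ]
  exact ⟨hcard L, fun hL => mem_of_forall_insert_erase_mem (insert_erase_mem_of_adjCols h) hI
    (hL.trans (hcard I hI).symm)⟩

lemma ssubset_bridgeBases {s t : Fin n} {I : Finset (Fin n)} (hI : I ∈ 𝓜) (hs : s ∈ I)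
    (ht : t ∉ I) (hmem : insert t (I.erase s) ∉ 𝓜) : 𝓜 ⊂ bridgeBases s t 𝓜 := by
  refine (Finset.ssubset_iff_of_subset subset_bridgeBases).2
    ⟨insert t (I.erase s), mem_bridgeBases.2 (Or.inr ⟨⟨by simp, ?_⟩, ?_⟩), hmem⟩
  · simp [ne_of_mem_of_not_mem hs ht]
  · rwa [Finset.erase_insert fun h => ht (Finset.mem_of_mem_erase h), Finset.insert_erase hs]

lemma isPreconnected_positroidCone_iff (h𝓜 : 𝓜.Nonempty) (hne : (positroidCone n k 𝓜).Nonempty) :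
    IsPreconnected (positroidCone n k 𝓜) ↔
      IsPreconnected (positroidCone n k (Finset.univ.powersetCard k)) := by
  induction 𝓜 using WellFoundedGT.induction with
  | _ 𝓜 ih =>
    obtain ⟨p, hp⟩ := hne
    by_cases hadj : ∀ I ∈ 𝓜, ∀ s ∈ I, ∀ t ∉ I, AdjCols s t → insert t (I.erase s) ∈ 𝓜
    · rw [← eq_powersetCard_of_adjCols h𝓜 (fun _ => card_eq_of_mem_positroidCone hp) hadj]
    · push Not at hadj
      obtain ⟨I, hI, s, hs, t, ht, hst, hmem⟩ := hadj
      have hlt := ssubset_bridgeBases hI hs ht hmem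
      rw [← ih _ hlt (h𝓜.mono hlt.subset) ⟨_, bridge_mem_positroidCone hp hst one_pos⟩]
      exact (isPreconnected_positroidCone_bridgeBases_iff ⟨p, hp⟩ hst hlt).symm

lemma torus_mem_positroidCone_singleton (hp : p ∈ positroidCone n k 𝓜) {I : Finset (Fin n)}
    (hI : I ∈ 𝓜) :
    (fun J => (∏ i ∈ J, if i ∈ I then 1 else 0) * p J) ∈ positroidCone n k {I} := by
  have hprod (J : Finset (Fin n)) :
      (∏ i ∈ J, if i ∈ I then 1 else 0 : ℝ) = if J ⊆ I then 1 else 0 := by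
    rw [Finset.prod_ite_zero, Finset.prod_const_one]
    rfl
  refine ⟨hp.1.torus _, fun J => ?_, fun J => ?_⟩
  · exact mul_nonneg (Finset.prod_nonneg fun _ _ => ite_nonneg zero_le_one le_rfl) (hp.2.1 J)
  · dsimp only
    rw [hprod, Finset.mem_singleton, mul_ne_zero_iff, ite_ne_right_iff, hp.2.2,
      and_iff_left one_ne_zero]
    refine ⟨fun ⟨hsub, hJ⟩ => Finset.eq_of_subset_of_card_le hsub ?_, ?_⟩
    · rw [card_eq_of_mem_positroidCone hp hI, card_eq_of_mem_positroidCone hp hJ]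
    · rintro rfl
      exact ⟨subset_rfl, hI⟩

lemma isPreconnected_positroidCone_singleton (I : Finset (Fin n)) :
    IsPreconnected (positroidCone n k {I}) := by
  rcases (positroidCone n k {I}).eq_empty_or_nonempty with h | ⟨p, hp⟩
  · rw [h]
    exact isPreconnected_empty
  have hray : positroidCone n k {I} = (fun c : ℝ => c • p) '' Set.Ioi 0 := by
    have hpos {q : Finset (Fin n) → ℝ} (hq : q ∈ positroidCone n k {I}) : 0 < q I :=
      pos_of_mem_positroidCone hq (Finset.mem_singleton_self I)
    refine subset_antisymm (fun q hq => ⟨q I / p I, div_pos (hpos hq) (hpos hp), ?_⟩)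
      (Set.image_subset_iff.2 fun c hc => smul_mem_positroidCone hp hc)
    ext J
    rcases eq_or_ne J I with rfl | hJ
    · simp [(hpos hp).ne']
    · have hJI : J ∉ ({I} : Finset _) := by simpa using hJ
      simp [eq_zero_of_mem_positroidCone hp hJI, eq_zero_of_mem_positroidCone hq hJI]
  rw [hray]
  exact isPreconnected_Ioi.image _ (by fun_prop)

/-- Chains of bridges join both cones to that of the uniform matroid. -/
lemma isPreconnected_positroidCone (h𝓜 : 𝓜.Nonempty) : IsPreconnected (positroidCone n k 𝓜) := by
  rcases (positroidCone n k 𝓜).eq_empty_or_nonempty with h | ⟨p, hp⟩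
  · rw [h]
    exact isPreconnected_empty
  obtain ⟨I, hI⟩ := h𝓜
  rw [isPreconnected_positroidCone_iff ⟨I, hI⟩ ⟨p, hp⟩,
    ← isPreconnected_positroidCone_iff (Finset.singleton_nonempty I)
      ⟨_, torus_mem_positroidCone_singleton hp hI⟩]
  exact isPreconnected_positroidCone_singleton I

/-- The point of the unit sphere on the ray through `p`. -/
noncomputable def unitPluecker (p : Finset (Fin n) → ℝ) : Finset (Fin n) → ℝ :=
  (√(∑ I, p I ^ 2))⁻¹ • p

lemma exists_minor_eq_smul (A : Matrix (Fin (k + 1)) (Fin n) ℝ) (c : ℝ) :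
    ∃ B : Matrix (Fin (k + 1)) (Fin n) ℝ, minor (k + 1) n B = c • minor (k + 1) n A := by
  refine ⟨A.updateRow 0 (c • A.row 0), funext fun I => ?_⟩
  rw [Pi.smul_apply, smul_eq_mul]
  by_cases hI : I.card = k + 1
  · rw [minor_of_card _ hI, minor_of_card _ hI, colDet, colDet]
    have hrow : (A.updateRow 0 (c • A.row 0)).submatrix id (I.orderEmbOfFin hI) =
        (A.submatrix id (I.orderEmbOfFin hI)).updateRow 0
          (c • (A.submatrix id (I.orderEmbOfFin hI)) 0) := by
      ext i j
      rcases eq_or_ne i 0 with rfl | h <;> simp [Matrix.updateRow_apply, *]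
    rw [hrow, Matrix.det_updateRow_smul, Matrix.updateRow_eq_self]
  · rw [minor_of_card_ne _ hI, minor_of_card_ne _ hI, mul_zero]

lemma IsPlueckerVector.exists_eq_minor (hp : IsPlueckerVector k n p) (hnonneg : ∀ I, 0 ≤ p I)
    (hsum : ∑ I, p I ^ 2 = 1) : ∃ A : Matrix (Fin k) (Fin n) ℝ, ∀ I, p I = minor k n A I := by
  obtain ⟨c, A, hA⟩ := hp
  rcases k with _ | k
  · have hminor (I : Finset (Fin n)) : minor 0 n A I = if I = ∅ then 1 else 0 := by
      by_cases hI : I.card = 0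
      · rw [minor_of_card A hI, colDet, Matrix.det_isEmpty, if_pos (Finset.card_eq_zero.1 hI)]
      · rw [minor_of_card_ne A hI, if_neg fun h => hI (Finset.card_eq_zero.2 h)]
    have hc : c = 1 := by
      simp only [hA, hminor, mul_ite, mul_one, mul_zero] at hsum hnonneg
      have hc0 : 0 ≤ c := by simpa using hnonneg ∅
      simpa [ite_pow, pow_eq_one_iff_of_nonneg hc0 two_ne_zero] using hsum
    exact ⟨A, fun I => by rw [hA, hc, one_mul]⟩
  · obtain ⟨B, hB⟩ := exists_minor_eq_smul A c
    exact ⟨B, fun I => by rw [hA, hB, Pi.smul_apply, smul_eq_mul]⟩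

lemma mem_positroidCell_iff :
    p ∈ positroidCell n k 𝓜 ↔ p ∈ positroidCone n k 𝓜 ∧ ∑ I, p I ^ 2 = 1 := by
  constructor
  · rintro ⟨⟨A, hA⟩, hsum, hsupp⟩
    refine ⟨⟨⟨1, A, fun I => by rw [hA, one_mul]⟩, fun I => ?_, fun I => ?_⟩, hsum⟩
    · by_cases hI : I ∈ 𝓜
      · exact ((hsupp I).1 hI).le
      · exact ((hsupp I).2 hI).ge
    · exact ⟨fun h => not_not.1 fun hI => h ((hsupp I).2 hI), fun hI => ((hsupp I).1 hI).ne'⟩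
  · rintro ⟨hp, hsum⟩
    exact ⟨hp.1.exists_eq_minor hp.2.1 hsum, hsum, fun I =>
      ⟨pos_of_mem_positroidCone hp, eq_zero_of_mem_positroidCone hp⟩⟩

lemma nonempty_of_mem_positroidCell (hp : p ∈ positroidCell n k 𝓜) : 𝓜.Nonempty := by
  obtain ⟨I, -, hI⟩ := Finset.exists_ne_zero_of_sum_ne_zero (hp.2.1.trans_ne one_ne_zero)
  exact ⟨I, not_not.1 fun h => hI (by rw [(hp.2.2 I).2 h, zero_pow two_ne_zero])⟩

lemma sum_sq_pos_of_mem_positroidCone (h𝓜 : 𝓜.Nonempty) (hp : p ∈ positroidCone n k 𝓜) :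
    0 < ∑ I, p I ^ 2 := by
  obtain ⟨I, hI⟩ := h𝓜
  exact Finset.sum_pos' (fun _ _ => sq_nonneg _)
    ⟨I, Finset.mem_univ I, pow_pos (pos_of_mem_positroidCone hp hI) 2⟩

lemma unitPluecker_mem_positroidCell (h𝓜 : 𝓜.Nonempty) (hp : p ∈ positroidCone n k 𝓜) :
    unitPluecker p ∈ positroidCell n k 𝓜 := by
  have hpos := sum_sq_pos_of_mem_positroidCone h𝓜 hp
  refine mem_positroidCell_iff.2
    ⟨smul_mem_positroidCone hp (inv_pos.2 (Real.sqrt_pos.2 hpos)), ?_⟩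
  simp only [unitPluecker, Pi.smul_apply, smul_eq_mul, mul_pow, ← Finset.mul_sum]
  rw [inv_pow, Real.sq_sqrt hpos.le, inv_mul_cancel₀ hpos.ne']

lemma unitPluecker_of_sum_sq_eq_one (h : ∑ I, p I ^ 2 = 1) : unitPluecker p = p := by
  rw [unitPluecker, h, Real.sqrt_one, inv_one, one_smul]

lemma isPreconnected_positroidCell : IsPreconnected (positroidCell n k 𝓜) := by
  rcases 𝓜.eq_empty_or_nonempty with rfl | h𝓜
  · exact Set.Subsingleton.isPreconnected fun p hp =>
      (Finset.not_nonempty_empty (nonempty_of_mem_positroidCell hp)).elim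
  have himage : positroidCell n k 𝓜 = unitPluecker '' positroidCone n k 𝓜 := by
    refine subset_antisymm (fun p hp => ⟨p, (mem_positroidCell_iff.1 hp).1,
      unitPluecker_of_sum_sq_eq_one hp.2.1⟩)
      (Set.image_subset_iff.2 fun p hp => unitPluecker_mem_positroidCell h𝓜 hp)
  rw [himage]
  refine (isPreconnected_positroidCone h𝓜).image _ (ContinuousOn.smul (ContinuousOn.inv₀ ?_
    fun p hp => (Real.sqrt_pos.2 (sum_sq_pos_of_mem_positroidCone h𝓜 hp)).ne') continuousOn_id)
  exact Continuous.continuousOn (by fun_prop)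

end Connectedness

/-! ### Birch's theorem -/

section Birch

lemma mul_exp_sub_mul_ge {a u : ℝ} (ha : 0 < a) (hu : 0 < u) (x : ℝ) :
    u * |x| - |2 * u - 2 * u * Real.log (2 * u / a)| ≤ a * Real.exp x - u * x := by
  have habs := neg_abs_le (2 * u - 2 * u * Real.log (2 * u / a))
  rcases le_total x 0 with hx | hx
  · rw [abs_of_nonpos hx]
    have := mul_pos ha (Real.exp_pos x)
    have := abs_nonneg (2 * u - 2 * u * Real.log (2 * u / a))
    linarith
  · have h2u : 0 < 2 * u / a := by positivity
    have tangent : 2 * u * (x - Real.log (2 * u / a) + 1) ≤ a * Real.exp x := by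
      have := Real.add_one_le_exp (x - Real.log (2 * u / a))
      rwa [Real.exp_sub, Real.exp_log h2u, le_div_iff₀ h2u, mul_div_assoc',
        div_le_iff₀ ha, mul_comm, mul_comm (Real.exp x)] at this
    rw [abs_of_nonneg hx]
    linarith

variable {ι : Type*} [Fintype ι] {a u : ι → ℝ}

lemma isBounded_setOf_sum_mul_exp_sub_mul_le (ha : ∀ i, 0 < a i) (hu : ∀ i, 0 < u i) (M : ℝ) :
    Bornology.IsBounded {s : ι → ℝ | ∑ i, (a i * Real.exp (s i) - u i * s i) ≤ M} := by
  refine Bornology.forall_isBounded_image_eval_iff.1 fun i => ?_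
  set C : ι → ℝ := fun j => |2 * u j - 2 * u j * Real.log (2 * u j / a j)|
  refine isBounded_iff_forall_norm_le.2 ⟨(M + ∑ j, C j) / u i, ?_⟩
  rintro _ ⟨s, hs, rfl⟩
  rw [le_div_iff₀' (hu i), Real.norm_eq_abs]
  calc u i * |s i| ≤ ∑ j, u j * |s j| :=
        Finset.single_le_sum (f := fun j => u j * |s j|)
          (fun j _ => mul_nonneg (hu j).le (abs_nonneg _)) (Finset.mem_univ i)
    _ ≤ ∑ j, ((a j * Real.exp (s j) - u j * s j) + C j) :=
        Finset.sum_le_sum fun j _ => sub_le_iff_le_add.1 (mul_exp_sub_mul_ge (ha j) (hu j) (s j))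
    _ ≤ M + ∑ j, C j := by
        rw [Finset.sum_add_distrib]
        exact add_le_add_left hs _

/-- The point is the minimizer on `L` of the convex function `∑ i, (a i * exp (s i) - u i * s i)`,
whose critical point equation is the conclusion. -/
lemma exists_sum_mul_exp_sub_mul_eq_zero (ha : ∀ i, 0 < a i) (hu : ∀ i, 0 < u i)
    (L : Submodule ℝ (ι → ℝ)) :
    ∃ s ∈ L, ∀ l ∈ L, ∑ i, (a i * Real.exp (s i) - u i) * l i = 0 := by
  set G : (ι → ℝ) → ℝ := fun s => ∑ i, (a i * Real.exp (s i) - u i * s i)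
  have hcont : Continuous G := by fun_prop
  have hbounded : Bornology.IsBounded {s : L | G s ≤ G 0} :=
    Bornology.isBounded_image_subtype_val.1 <|
      (isBounded_setOf_sum_mul_exp_sub_mul_le ha hu (G 0)).subset
        (Set.image_subset_iff.2 subset_rfl)
  obtain ⟨s, hs⟩ :=
    (hcont.comp (continuous_subtype_val (p := (· ∈ L)))).exists_forall_le_of_isBounded 0 hbounded
  refine ⟨s, s.2, fun l hl => ?_⟩
  have hmin : IsLocalMin (fun t : ℝ => G ((s : ι → ℝ) + t • l)) 0 := by
    refine Filter.Eventually.of_forall fun t => ?_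
    simpa using hs (s + t • ⟨l, hl⟩)
  refine hmin.hasDerivAt_eq_zero (HasDerivAt.fun_sum fun i _ => ?_)
  simp only [Pi.add_apply, Pi.smul_apply, smul_eq_mul]
  have hline : HasDerivAt (fun t : ℝ => (s : ι → ℝ) i + t * l i) (l i) 0 := by
    simpa using ((hasDerivAt_id (0 : ℝ)).mul_const (l i)).const_add ((s : ι → ℝ) i)
  simpa [sub_mul, mul_assoc] using (hline.exp.const_mul (a i)).fun_sub (hline.const_mul (u i))

end Birch

section PosPartProducts

variable {ι : Type*} {s : Finset ι} {x y w : ι → ℝ}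

lemma prod_rpow_posPart_lt (hy : ∀ i ∈ s, 0 ≤ y i) (hw : ∀ i ∈ s, 0 < w i → y i < x i)
    (hpos : ∃ i ∈ s, 0 < w i) : ∏ i ∈ s, y i ^ (w i)⁺ < ∏ i ∈ s, x i ^ (w i)⁺ := by
  by_cases hzero : ∃ i ∈ s, y i ^ (w i)⁺ = 0
  · obtain ⟨i, hi, h⟩ := hzero
    rw [Finset.prod_eq_zero hi h]
    refine Finset.prod_pos fun j hj => ?_
    rcases le_or_gt (w j) 0 with hwj | hwj
    · rw [posPart_eq_zero.2 hwj, Real.rpow_zero]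
      exact one_pos
    · exact Real.rpow_pos_of_pos ((hy j hj).trans_lt (hw j hj hwj)) _
  push Not at hzero
  obtain ⟨j, hj, hwj⟩ := hpos
  refine Finset.prod_lt_prod
    (fun i hi => (Real.rpow_nonneg (hy i hi) _).lt_of_ne' (hzero i hi)) (fun i hi => ?_)
    ⟨j, hj, Real.rpow_lt_rpow (hy j hj) (hw j hj hwj) (posPart_pos hwj)⟩
  rcases le_or_gt (w i) 0 with hwi | hwi
  · rw [posPart_eq_zero.2 hwi, Real.rpow_zero, Real.rpow_zero]
  · exact Real.rpow_le_rpow (hy i hi) (hw i hi hwi).le (posPart_nonneg _)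

lemma eq_zero_of_prod_rpow_posPart_eq (hx : ∀ i ∈ s, 0 ≤ x i) (hy : ∀ i ∈ s, 0 ≤ y i)
    (hsum : ∑ i ∈ s, w i = 0) (hpos : ∀ i ∈ s, 0 < w i → y i < x i)
    (hneg : ∀ i ∈ s, w i < 0 → x i < y i)
    (hxw : ∏ i ∈ s, x i ^ (w i)⁺ = ∏ i ∈ s, x i ^ (w i)⁻)
    (hyw : ∏ i ∈ s, y i ^ (w i)⁺ = ∏ i ∈ s, y i ^ (w i)⁻) : ∀ i ∈ s, w i = 0 := by
  by_contra! hex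
  have hlt := prod_rpow_posPart_lt hy hpos
    (Finset.exists_pos_of_sum_zero_of_exists_nonzero w hsum hex)
  have hgt := prod_rpow_posPart_lt (w := -w) hx (fun i hi hw => hneg i hi (neg_pos.1 hw))
    (Finset.exists_pos_of_sum_zero_of_exists_nonzero _ (by simpa using hsum) (by simpa using hex))
  simp only [Pi.neg_apply, posPart_neg] at hgt
  exact (hlt.trans_eq hxw).trans (hgt.trans_eq hyw.symm) |>.false

end PosPartProducts

/-! ### Open convex hulls -/

section OpenHull

variable {ι E : Type*} [AddCommGroup E] [Module ℝ E] {s : Finset ι} {v : ι → E}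

/-- The convex combinations of the points `v i`, `i ∈ s`, in which every weight is positive: the
relative interior of their convex hull. -/
def openHull (s : Finset ι) (v : ι → E) : Set E :=
  {x | ∃ u : ι → ℝ, (∀ i ∈ s, 0 < u i) ∧ ∑ i ∈ s, u i = 1 ∧ ∑ i ∈ s, u i • v i = x}

lemma convex_openHull : Convex ℝ (openHull s v) := by
  rw [convex_iff_forall_pos]
  rintro _ ⟨u, hu, husum, rfl⟩ _ ⟨w, hw, hwsum, rfl⟩ a b ha hb hab
  refine ⟨fun i => a * u i + b * w i,
    fun i hi => add_pos (mul_pos ha (hu i hi)) (mul_pos hb (hw i hi)), ?_, ?_⟩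
  · rw [Finset.sum_add_distrib, ← Finset.mul_sum, ← Finset.mul_sum, husum, hwsum, mul_one, mul_one,
      hab]
  · simp only [add_smul, mul_smul, Finset.sum_add_distrib, Finset.smul_sum]

lemma openHull_nonempty (hs : s.Nonempty) : (openHull s v).Nonempty := by
  have hcard : (0 : ℝ) < s.card := Nat.cast_pos.2 hs.card_pos
  refine ⟨_, fun _ => (s.card : ℝ)⁻¹, fun _ _ => inv_pos.2 hcard, ?_, rfl⟩
  rw [Finset.sum_const, nsmul_eq_mul, mul_inv_cancel₀ hcard.ne']

lemma openHull_subset_convexHull : openHull s v ⊆ convexHull ℝ (v '' s) := by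
  rintro _ ⟨u, hu, husum, rfl⟩
  exact (convex_convexHull ℝ _).sum_mem (fun i hi => (hu i hi).le) husum
    fun i hi => subset_convexHull ℝ _ (Set.mem_image_of_mem v hi)

lemma openSegment_subset_openHull {i : ι} (hi : i ∈ s) {x : E} (hx : x ∈ openHull s v) :
    openSegment ℝ (v i) x ⊆ openHull s v := by
  classical
  obtain ⟨u, hu, husum, rfl⟩ := hx
  rintro _ ⟨a, b, ha, hb, hab, rfl⟩
  refine ⟨fun j => (if j = i then a else 0) + b * u j, fun j hj => ?_, ?_, ?_⟩
  · exact add_pos_of_nonneg_of_pos (ite_nonneg ha.le le_rfl) (mul_pos hb (hu j hj))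
  · rw [Finset.sum_add_distrib, Finset.sum_ite_eq' s i, if_pos hi, ← Finset.mul_sum, husum, mul_one,
      hab]
  · simp only [add_smul, ite_smul, zero_smul, mul_smul, Finset.sum_add_distrib,
      Finset.sum_ite_eq', if_pos hi, Finset.smul_sum]

lemma vectorSpan_convexHull (t : Set E) : vectorSpan ℝ (convexHull ℝ t) = vectorSpan ℝ t := by
  rw [← direction_affineSpan, affineSpan_convexHull, direction_affineSpan]

lemma vectorSpan_openHull (hs : s.Nonempty) :
    vectorSpan ℝ (openHull s v) = vectorSpan ℝ (v '' s) := by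
  refine le_antisymm ?_ ?_
  · exact (vectorSpan_mono ℝ openHull_subset_convexHull).trans_eq (vectorSpan_convexHull _)
  · obtain ⟨x, hx⟩ := openHull_nonempty (v := v) hs
    have vertex_sub_mem {i : ι} (hi : i ∈ s) : v i - x ∈ vectorSpan ℝ (openHull s v) := by
      have hmid : midpoint ℝ (v i) x ∈ openHull s v :=
        openSegment_subset_openHull hi hx (midpoint_mem_openSegment _ _)
      have hhalf := vsub_mem_vectorSpan ℝ hmid hx
      rw [midpoint_vsub_right, vsub_eq_sub, invOf_eq_inv] at hhalf
      exact (Submodule.smul_mem_iff _ (inv_ne_zero two_ne_zero)).1 hhalf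
    rw [vectorSpan_def, Submodule.span_le]
    rintro _ ⟨_, ⟨i, hi, rfl⟩, _, ⟨j, hj, rfl⟩, rfl⟩
    have hsub := sub_mem (vertex_sub_mem hi) (vertex_sub_mem hj)
    rwa [sub_sub_sub_cancel_right] at hsub

variable [TopologicalSpace E] [IsTopologicalAddGroup E] [ContinuousSMul ℝ E]

lemma convexHull_subset_closure_openHull (hs : s.Nonempty) :
    convexHull ℝ (v '' s) ⊆ closure (openHull s v) := by
  refine convexHull_min ?_ convex_openHull.closure
  rintro _ ⟨i, hi, rfl⟩
  obtain ⟨x, hx⟩ := openHull_nonempty (v := v) hs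
  exact closure_mono (openSegment_subset_openHull hi hx)
    (segment_subset_closure_openSegment (left_mem_segment ℝ _ _))

end OpenHull

/-! ### Torus orbits and the moment map -/

section Torus

variable {n k : ℕ} {𝓜 : Finset (Finset (Fin n))} {p : Finset (Fin n) → ℝ}

/-- The logarithmic weights with which the torus `ℝⁿ`, extended by a factor scaling all
coordinates, acts on Plücker coordinates. -/
noncomputable def torusWeight (n : ℕ) : ((Fin n → ℝ) × ℝ) →ₗ[ℝ] (Finset (Fin n) → ℝ) :=
  LinearMap.pi fun I => (dotProductEquiv ℝ (Fin n) (ind n I)).coprod LinearMap.id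

lemma torusWeight_apply (y : (Fin n → ℝ) × ℝ) (I : Finset (Fin n)) :
    torusWeight n y I = ind n I ⬝ᵥ y.1 + y.2 :=
  rfl

lemma ind_dotProduct (I : Finset (Fin n)) (θ : Fin n → ℝ) : ind n I ⬝ᵥ θ = ∑ i ∈ I, θ i := by
  simp [ind, dotProduct]

lemma sum_mul_torusWeight (s : Finset (Finset (Fin n))) (u : Finset (Fin n) → ℝ)
    (y : (Fin n → ℝ) × ℝ) : ∑ I ∈ s, u I * torusWeight n y I =
      (∑ I ∈ s, u I • ind n I) ⬝ᵥ y.1 + (∑ I ∈ s, u I) * y.2 := by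
  simp only [torusWeight_apply, mul_add, Finset.sum_add_distrib, Finset.sum_mul, sum_dotProduct,
    smul_dotProduct, smul_eq_mul]

lemma sum_mul_torusWeight_eq_zero_iff {s : Finset (Finset (Fin n))} {u : Finset (Fin n) → ℝ} :
    (∀ y, ∑ I ∈ s, u I * torusWeight n y I = 0) ↔
      ∑ I ∈ s, u I • ind n I = 0 ∧ ∑ I ∈ s, u I = 0 := by
  simp only [sum_mul_torusWeight]
  refine ⟨fun h => ⟨dotProduct_eq_zero _ fun θ => ?_, ?_⟩, fun h y => by simp [h.1, h.2]⟩
  · simpa using h (θ, 0)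
  · simpa using h (0, 1)

/-- The action on Plücker vectors of the positive torus element with logarithm `y`. -/
noncomputable def torusScale (y : (Fin n → ℝ) × ℝ) (p : Finset (Fin n) → ℝ) :
    Finset (Fin n) → ℝ :=
  fun I => Real.exp (torusWeight n y I) * p I

lemma torusScale_mem_positroidCone (y : (Fin n → ℝ) × ℝ) (hp : p ∈ positroidCone n k 𝓜) :
    torusScale y p ∈ positroidCone n k 𝓜 := by
  refine ⟨?_, fun I => mul_nonneg (Real.exp_pos _).le (hp.2.1 I), fun I => ?_⟩
  · have heq : torusScale y p =
        Real.exp y.2 • fun I => (∏ i ∈ I, Real.exp (y.1 i)) * p I := by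
      ext I
      rw [torusScale, torusWeight_apply, ind_dotProduct, add_comm, Real.exp_add, Real.exp_sum,
        mul_assoc, Pi.smul_apply, smul_eq_mul]
    rw [heq]
    exact (hp.1.torus _).smul _
  · rw [torusScale, mul_ne_zero_iff, and_iff_right (Real.exp_pos _).ne', hp.2.2]

lemma sum_eq_sum_univ_of_eq_zero {M : Type*} [AddCommMonoid M] {f : Finset (Fin n) → M}
    (h : ∀ I ∉ 𝓜, f I = 0) : ∑ I ∈ 𝓜, f I = ∑ I, f I :=
  Finset.sum_subset (Finset.subset_univ 𝓜) fun I _ => h I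

lemma sum_sq_eq_sum_univ (hp : ∀ I ∉ 𝓜, p I = 0) : ∑ I ∈ 𝓜, p I ^ 2 = ∑ I, p I ^ 2 :=
  sum_eq_sum_univ_of_eq_zero fun I hI => by rw [hp I hI, zero_pow two_ne_zero]

lemma momentMap_eq_sum (p : Finset (Fin n) → ℝ) : momentMap n p = ∑ I, p I ^ 2 • ind n I := by
  ext i
  simp [momentMap, ind, Finset.sum_apply]

lemma sum_sq_smul_ind_eq_momentMap (hp : ∀ I ∉ 𝓜, p I = 0) :
    ∑ I ∈ 𝓜, p I ^ 2 • ind n I = momentMap n p := by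
  rw [momentMap_eq_sum]
  exact sum_eq_sum_univ_of_eq_zero fun I hI => by rw [hp I hI, zero_pow two_ne_zero, zero_smul]

lemma momentMap_mem_openHull (hp : p ∈ positroidCell n k 𝓜) :
    momentMap n p ∈ openHull 𝓜 (ind n) := by
  have hzero (I) (hI : I ∉ 𝓜) : p I = 0 := (hp.2.2 I).2 hI
  exact ⟨fun I => p I ^ 2, fun I hI => pow_pos ((hp.2.2 I).1 hI) 2,
    (sum_sq_eq_sum_univ hzero).trans hp.2.1, sum_sq_smul_ind_eq_momentMap hzero⟩

lemma exists_momentMap_torusScale_eq (hp : p ∈ positroidCone n k 𝓜) {x : Fin n → ℝ}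
    (hx : x ∈ openHull 𝓜 (ind n)) :
    ∃ y, torusScale y p ∈ positroidCell n k 𝓜 ∧ momentMap n (torusScale y p) = x := by
  obtain ⟨u, hu, hsum, rfl⟩ := hx
  obtain ⟨_, ⟨y, rfl⟩, hy⟩ := exists_sum_mul_exp_sub_mul_eq_zero (a := fun I : 𝓜 => p I ^ 2)
    (fun I => pow_pos (pos_of_mem_positroidCone hp I.2) 2) (fun I => hu I I.2)
    (LinearMap.range ((LinearMap.funLeft ℝ ℝ ((↑) : 𝓜 → Finset (Fin n))).comp (torusWeight n)))
  have hsq (I : Finset (Fin n)) : torusScale ((2⁻¹ : ℝ) • y) p I ^ 2 =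
      p I ^ 2 * Real.exp (torusWeight n y I) := by
    rw [torusScale, mul_pow, ← Real.exp_nat_mul, map_smul, mul_comm]
    simp
  have critical : ∀ z, ∑ I ∈ 𝓜, (torusScale ((2⁻¹ : ℝ) • y) p I ^ 2 - u I) *
      torusWeight n z I = 0 := fun z => by
    simp only [hsq]
    rw [← Finset.sum_coe_sort]
    exact hy _ ⟨z, rfl⟩
  rw [sum_mul_torusWeight_eq_zero_iff] at critical
  simp only [sub_smul, Finset.sum_sub_distrib, sub_eq_zero] at critical
  have hmem := torusScale_mem_positroidCone ((2⁻¹ : ℝ) • y) hp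
  have hzero (I) (hI : I ∉ 𝓜) := eq_zero_of_mem_positroidCone hmem hI
  refine ⟨(2⁻¹ : ℝ) • y, mem_positroidCell_iff.2 ⟨hmem, ?_⟩, ?_⟩
  · rw [← sum_sq_eq_sum_univ hzero, critical.2, hsum]
  · rw [← sum_sq_smul_ind_eq_momentMap hzero, critical.1]

lemma image_momentMap_positroidCell (hne : (positroidCell n k 𝓜).Nonempty) :
    momentMap n '' positroidCell n k 𝓜 = openHull 𝓜 (ind n) := by
  obtain ⟨p, hp⟩ := hne
  refine subset_antisymm (Set.image_subset_iff.2 fun q hq => momentMap_mem_openHull hq)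
    fun x hx => ?_
  obtain ⟨y, hy, hyx⟩ := exists_momentMap_torusScale_eq (mem_positroidCell_iff.1 hp).1 hx
  exact ⟨_, hy, hyx⟩

end Torus

/-! ### The dimension of the matroid polytope -/

section Polytope

variable {n : ℕ} {𝓜 : Finset (Finset (Fin n))}

/-- The vectors that are constant on each connected component of the matroid with bases `𝓜`. -/
noncomputable def componentSubspace (n : ℕ) (𝓜 : Finset (Finset (Fin n))) :
    Submodule ℝ (Fin n → ℝ) :=
  LinearMap.range (LinearMap.funLeft ℝ ℝ (Quot.mk (exchRel n 𝓜)))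

lemma finrank_componentSubspace :
    Module.finrank ℝ (componentSubspace n 𝓜) = Nat.card (Quot (exchRel n 𝓜)) := by
  have := Fintype.ofFinite (Quot (exchRel n 𝓜))
  rw [componentSubspace, LinearMap.finrank_range_of_inj
    (LinearMap.funLeft_injective_of_surjective ℝ ℝ _ Quot.mk_surjective),
    Module.finrank_fintype_fun_eq_card, Nat.card_eq_fintype_card]

lemma ind_insert_erase_dotProduct_eq_iff {I : Finset (Fin n)} {i j : Fin n} (hi : i ∈ I)
    (hj : j ∉ I) {θ : Fin n → ℝ} :
    ind n (insert j (I.erase i)) ⬝ᵥ θ = ind n I ⬝ᵥ θ ↔ θ j = θ i := by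
  rw [ind_dotProduct, ind_dotProduct, Finset.sum_insert fun h => hj (Finset.mem_of_mem_erase h),
    ← Finset.add_sum_erase I θ hi, add_left_inj]

lemma mem_componentSubspace_iff (h𝓜 : IsBasisFamily 𝓜) {θ : Fin n → ℝ} :
    θ ∈ componentSubspace n 𝓜 ↔ ∀ I ∈ 𝓜, ∀ J ∈ 𝓜, ind n I ⬝ᵥ θ = ind n J ⬝ᵥ θ := by
  refine ⟨?_, fun h => ⟨Quot.lift θ ?_, rfl⟩⟩
  · rintro ⟨f, rfl⟩ I hI J hJ
    refine exchange_induction (J := J) (motive := fun K => ind n K ⬝ᵥ _ = ind n J ⬝ᵥ _) rfl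
      (fun K hK hne => ?_) I hI
    obtain ⟨i, hi, hiJ, j, hj, hjK, hmem⟩ := h𝓜.exists_exchange_of_ne hK hJ hne
    have hclass : Quot.mk (exchRel n 𝓜) j = Quot.mk (exchRel n 𝓜) i :=
      (Quot.sound (r := exchRel n 𝓜) (Or.inr ⟨K, hK, _, hmem, hi, hjK, rfl⟩)).symm
    exact ⟨i, hi, hiJ, j, hj, hmem,
      (((ind_insert_erase_dotProduct_eq_iff hi hjK).2 (congrArg f hclass)).symm.trans ·)⟩
  · rintro i j (rfl | ⟨I, hI, _, hJ, hi, hj, rfl⟩)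
    · rfl
    · exact ((ind_insert_erase_dotProduct_eq_iff hi hj).1 (h _ hJ _ hI)).symm

lemma map_dotProductEquiv_componentSubspace (h𝓜 : IsBasisFamily 𝓜) :
    (componentSubspace n 𝓜).map (dotProductEquiv ℝ (Fin n) : _ →ₗ[ℝ] _) =
      (vectorSpan ℝ (ind n '' 𝓜)).dualAnnihilator := by
  ext φ
  obtain ⟨θ, rfl⟩ := (dotProductEquiv ℝ (Fin n)).surjective φ
  rw [Submodule.mem_map_equiv, LinearEquiv.symm_apply_apply, mem_componentSubspace_iff h𝓜,
    Submodule.mem_dualAnnihilator, vectorSpan_def]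
  change _ ↔ Submodule.span ℝ _ ≤ LinearMap.ker (dotProductEquiv ℝ (Fin n) θ)
  rw [Submodule.span_le, Set.vsub_subset_iff]
  simp only [Set.forall_mem_image, SetLike.mem_coe, LinearMap.mem_ker,
    dotProductEquiv_apply_apply, vsub_eq_sub, dotProduct_comm θ, sub_dotProduct, sub_eq_zero]

lemma finrank_vectorSpan_ind (h𝓜 : IsBasisFamily 𝓜) :
    Module.finrank ℝ (vectorSpan ℝ (ind n '' 𝓜)) = n - Nat.card (Quot (exchRel n 𝓜)) := by
  have hadd := Subspace.finrank_add_finrank_dualAnnihilator_eq (vectorSpan ℝ (ind n '' 𝓜))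
  rw [← map_dotProductEquiv_componentSubspace h𝓜, LinearEquiv.finrank_map_eq,
    finrank_componentSubspace, Module.finrank_fin_fun] at hadd
  exact Nat.eq_sub_of_add_eq hadd

lemma dimH_convexHull_ind (h𝓜 : IsBasisFamily 𝓜) (hne : 𝓜.Nonempty) :
    dimH (convexHull ℝ (ind n '' 𝓜)) = (n - Nat.card (Quot (exchRel n 𝓜)) : ℕ) := by
  rw [Real.Convex.dimH_eq_finrank_vectorSpan (convex_convexHull ℝ _)
    (Set.Nonempty.convexHull (hne.to_set.image _)), vectorSpan_convexHull,
    finrank_vectorSpan_ind h𝓜]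

lemma dimH_openHull_ind (h𝓜 : IsBasisFamily 𝓜) (hne : 𝓜.Nonempty) :
    dimH (openHull 𝓜 (ind n)) = (n - Nat.card (Quot (exchRel n 𝓜)) : ℕ) := by
  rw [Real.Convex.dimH_eq_finrank_vectorSpan convex_openHull (openHull_nonempty hne),
    vectorSpan_openHull hne, finrank_vectorSpan_ind h𝓜]

end Polytope

/-! ### Cells that are single torus orbits -/

section SingleOrbit

variable {n k : ℕ} {𝓜 : Finset (Finset (Fin n))} {p x : Finset (Fin n) → ℝ}

/-- The positroid cell is a single orbit of the positive torus, the combinatorial form of the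
positroid variety being toric. -/
def IsSingleOrbit (n k : ℕ) (𝓜 : Finset (Finset (Fin n))) : Prop :=
  ∀ p ∈ positroidCell n k 𝓜, ∀ q ∈ positroidCell n k 𝓜, ∃ y, torusScale y p = q

lemma isSingleOrbit_of_injOn (h : Set.InjOn (momentMap n) (positroidCell n k 𝓜)) :
    IsSingleOrbit n k 𝓜 := by
  intro p hp q hq
  obtain ⟨y, hy, hyq⟩ := exists_momentMap_torusScale_eq (mem_positroidCell_iff.1 hp).1
    (momentMap_mem_openHull hq)
  exact ⟨y, h hy hq hyq⟩

/-- The nonnegative unit vectors supported on `𝓜`, a compact set containing the closure of the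
positroid cell. -/
def nonnegSphere (𝓜 : Finset (Finset (Fin n))) : Set (Finset (Fin n) → ℝ) :=
  {x | (∀ I, 0 ≤ x I) ∧ (∀ I ∉ 𝓜, x I = 0) ∧ ∑ I, x I ^ 2 = 1}

lemma isCompact_nonnegSphere : IsCompact (nonnegSphere 𝓜) := by
  refine (isCompact_Icc (a := 0) (b := 1)).of_isClosed_subset ?_ fun x hx => ⟨hx.1, fun I => ?_⟩
  · simp only [nonnegSphere, Set.ofPred_and, Set.ofPred_forall]
    exact (isClosed_iInter fun I => isClosed_le continuous_const (continuous_apply I)).inter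
      ((isClosed_iInter fun I => isClosed_iInter fun _ =>
        isClosed_eq (continuous_apply I) continuous_const).inter
        (isClosed_eq (by fun_prop) continuous_const))
  · refine (sq_le_one_iff₀ (hx.1 I)).1 (hx.2.2 ▸ ?_)
    exact Finset.single_le_sum (f := fun I => x I ^ 2) (fun _ _ => sq_nonneg _) (Finset.mem_univ I)

lemma closure_positroidCell_subset : closure (positroidCell n k 𝓜) ⊆ nonnegSphere 𝓜 :=
  closure_minimal (fun _ hp => ⟨(mem_positroidCell_iff.1 hp).1.2.1, fun I => (hp.2.2 I).2, hp.2.1⟩)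
    isCompact_nonnegSphere.isClosed

lemma isCompact_closure_positroidCell : IsCompact (closure (positroidCell n k 𝓜)) :=
  isCompact_nonnegSphere.of_isClosed_subset isClosed_closure closure_positroidCell_subset

lemma momentMap_mem_convexHull (hx : x ∈ nonnegSphere 𝓜) :
    momentMap n x ∈ convexHull ℝ (ind n '' 𝓜) := by
  rw [← sum_sq_smul_ind_eq_momentMap hx.2.1]
  exact (convex_convexHull ℝ _).sum_mem (fun I _ => sq_nonneg _)
    ((sum_sq_eq_sum_univ hx.2.1).trans hx.2.2)
    fun I hI => subset_convexHull ℝ _ (Set.mem_image_of_mem _ hI)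

lemma contDiff_momentMap : ContDiff ℝ 1 (momentMap n) := by
  rw [funext momentMap_eq_sum]
  fun_prop

/-- The binomial relations defining the toric variety that contains the orbit. -/
lemma IsSingleOrbit.prod_rpow_eq (h : IsSingleOrbit n k 𝓜) (hp : p ∈ positroidCell n k 𝓜)
    {w : Finset (Fin n) → ℝ} (hw : ∀ y, ∑ I ∈ 𝓜, w I * torusWeight n y I = 0)
    (hx : x ∈ closure (positroidCell n k 𝓜)) :
    ∏ I ∈ 𝓜, (x I / p I) ^ (w I)⁺ = ∏ I ∈ 𝓜, (x I / p I) ^ (w I)⁻ := by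
  have hcont {v : Finset (Fin n) → ℝ} (hv : 0 ≤ v) :
      Continuous fun x : Finset (Fin n) → ℝ => ∏ I ∈ 𝓜, (x I / p I) ^ v I :=
    continuous_finsetProd _ fun I _ => (Real.continuous_rpow_const (hv I)).comp (by fun_prop)
  refine closure_minimal (fun q hq => ?_)
    (isClosed_eq (hcont (fun I => posPart_nonneg (w I))) (hcont (fun I => negPart_nonneg (w I)))) hx
  obtain ⟨y, rfl⟩ := h p hp q hq
  have prod_eq_exp (v : Finset (Fin n) → ℝ) : ∏ I ∈ 𝓜, (torusScale y p I / p I) ^ v I =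
      Real.exp (∑ I ∈ 𝓜, v I * torusWeight n y I) := by
    rw [Real.exp_sum]
    refine Finset.prod_congr rfl fun I hI => ?_
    rw [torusScale, mul_div_cancel_right₀ _ ((hp.2.2 I).1 hI).ne', mul_comm, Real.exp_mul]
  rw [Set.mem_ofPred_eq, prod_eq_exp, prod_eq_exp, Real.exp_eq_exp, ← sub_eq_zero,
    ← Finset.sum_sub_distrib]
  simp only [← sub_mul, posPart_sub_negPart, hw y]

lemma IsSingleOrbit.injOn_closure (h : IsSingleOrbit n k 𝓜)
    (hne : (positroidCell n k 𝓜).Nonempty) :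
    Set.InjOn (momentMap n) (closure (positroidCell n k 𝓜)) := by
  obtain ⟨p, hp⟩ := hne
  intro x hx y hy hxy
  obtain ⟨hx0, hxzero, hxsum⟩ := closure_positroidCell_subset hx
  obtain ⟨hy0, hyzero, hysum⟩ := closure_positroidCell_subset hy
  have hrel : ∀ z, ∑ I ∈ 𝓜, (x I ^ 2 - y I ^ 2) * torusWeight n z I = 0 := by
    rw [sum_mul_torusWeight_eq_zero_iff]
    simp only [sub_smul, Finset.sum_sub_distrib, sub_eq_zero, sum_sq_smul_ind_eq_momentMap hxzero,
      sum_sq_smul_ind_eq_momentMap hyzero, sum_sq_eq_sum_univ hxzero, sum_sq_eq_sum_univ hyzero]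
    exact ⟨hxy, hxsum.trans hysum.symm⟩
  have hppos {I} (hI : I ∈ 𝓜) : 0 < p I := (hp.2.2 I).1 hI
  have hsq := eq_zero_of_prod_rpow_posPart_eq (fun I hI => div_nonneg (hx0 I) (hppos hI).le)
    (fun I hI => div_nonneg (hy0 I) (hppos hI).le) (sum_mul_torusWeight_eq_zero_iff.1 hrel).2
    (fun I hI hw => div_lt_div_of_pos_right
      (lt_of_pow_lt_pow_left₀ 2 (hx0 I) (sub_pos.1 hw)) (hppos hI))
    (fun I hI hw => div_lt_div_of_pos_right
      (lt_of_pow_lt_pow_left₀ 2 (hy0 I) (sub_neg.1 hw)) (hppos hI))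
    (h.prod_rpow_eq hp hrel hx) (h.prod_rpow_eq hp hrel hy)
  ext I
  by_cases hI : I ∈ 𝓜
  · exact (pow_left_inj₀ (hx0 I) (hy0 I) two_ne_zero).1 (sub_eq_zero.1 (hsq I hI))
  · rw [hxzero I hI, hyzero I hI]

lemma image_momentMap_closure (hne : (positroidCell n k 𝓜).Nonempty) :
    momentMap n '' closure (positroidCell n k 𝓜) = convexHull ℝ (ind n '' 𝓜) := by
  refine subset_antisymm (Set.image_subset_iff.2 fun x hx =>
    momentMap_mem_convexHull (closure_positroidCell_subset hx)) ?_
  refine (convexHull_subset_closure_openHull (nonempty_of_mem_positroidCell hne.some_mem)).trans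
    (closure_minimal ?_
      (isCompact_closure_positroidCell.image contDiff_momentMap.continuous).isClosed)
  rw [← image_momentMap_positroidCell hne]
  exact Set.image_mono subset_closure

lemma IsSingleOrbit.exists_homeomorph (h : IsSingleOrbit n k 𝓜)
    (hne : (positroidCell n k 𝓜).Nonempty) :
    ∃ h : closure (positroidCell n k 𝓜) ≃ₜ (convexHull ℝ (ind n '' 𝓜) : Set (Fin n → ℝ)),
      ∀ x : closure (positroidCell n k 𝓜), (h x : Fin n → ℝ) = momentMap n x := by
  have hbij : Set.BijOn (momentMap n) (closure (positroidCell n k 𝓜))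
      (convexHull ℝ (ind n '' 𝓜)) := image_momentMap_closure hne ▸ (h.injOn_closure hne).bijOn_image
  have : CompactSpace (closure (positroidCell n k 𝓜)) :=
    isCompact_iff_compactSpace.1 isCompact_closure_positroidCell
  have hcont : Continuous (hbij.equiv (momentMap n)) :=
    (contDiff_momentMap.continuous.comp continuous_subtype_val).subtype_mk _
  exact ⟨hcont.homeoOfEquivCompactToT2, fun _ => rfl⟩

end SingleOrbit

/-! ### Dimensions -/

section ProductSpan

variable {K V W : Type*} [Ring K] [AddCommGroup V] [Module K V] [AddCommGroup W] [Module K W]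

lemma vectorSpan_prod {s : Set V} {t : Set W} (hs : s.Nonempty) (ht : t.Nonempty) :
    vectorSpan K (s ×ˢ t) = (vectorSpan K s).prod (vectorSpan K t) := by
  simp only [vectorSpan_def, Set.prod_vsub_prod_comm]
  exact Submodule.span_prod_eq _ hs.zero_mem_vsub_self ht.zero_mem_vsub_self

lemma finrank_prod_submodule [StrongRankCondition K] (P : Submodule K V) (Q : Submodule K W)
    [Module.Free K P] [Module.Finite K P] [Module.Free K Q] [Module.Finite K Q] :
    Module.finrank K (P.prod Q) = Module.finrank K P + Module.finrank K Q := by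
  have hrange : P.prod Q = LinearMap.range (P.subtype.prodMap Q.subtype) := by
    rw [LinearMap.range_prodMap, P.range_subtype, Q.range_subtype]
  rw [hrange, LinearMap.finrank_range_of_inj
    (P.injective_subtype.prodMap Q.injective_subtype), Module.finrank_prod]

end ProductSpan

lemma vectorSpan_Icc {a b : ℝ} (hab : a < b) : vectorSpan ℝ (Set.Icc a b) = ⊤ := by
  rw [← direction_affineSpan,
    (convex_Icc a b).interior_nonempty_iff_affineSpan_eq_top.1 (by simpa using hab),
    AffineSubspace.direction_top]

lemma finrank_vectorSpan_Icc_prod {V : Type*} [AddCommGroup V] [Module ℝ V]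
    [FiniteDimensional ℝ V] {a b : ℝ} (hab : a < b) {s : Set V} (hs : s.Nonempty) :
    Module.finrank ℝ (vectorSpan ℝ (Set.Icc a b ×ˢ s)) =
      Module.finrank ℝ (vectorSpan ℝ s) + 1 := by
  rw [vectorSpan_prod (Set.nonempty_Icc.2 hab.le) hs, finrank_prod_submodule, vectorSpan_Icc hab,
    finrank_top, Module.finrank_self, add_comm]

section CellDimension

variable {n k : ℕ} {𝓜 : Finset (Finset (Fin n))} {p q : Finset (Fin n) → ℝ}

lemma isBasisFamily_of_mem_positroidCell (hp : p ∈ positroidCell n k 𝓜) : IsBasisFamily 𝓜 :=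
  isBasisFamily_of_mem_positroidCone (mem_positroidCell_iff.1 hp).1

lemma le_dimH_positroidCell (hne : (positroidCell n k 𝓜).Nonempty) :
    (n - Nat.card (Quot (exchRel n 𝓜)) : ℕ) ≤ dimH (positroidCell n k 𝓜) := by
  rw [← dimH_openHull_ind (isBasisFamily_of_mem_positroidCell hne.some_mem)
    (nonempty_of_mem_positroidCell hne.some_mem), ← image_momentMap_positroidCell hne]
  exact contDiff_momentMap.contDiffOn.dimH_image_le convex_univ (Set.subset_univ _)

lemma unitPluecker_smul_of_pos {c : ℝ} (hc : 0 < c) (p : Finset (Fin n) → ℝ) :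
    unitPluecker (c • p) = unitPluecker p := by
  simp only [unitPluecker, Pi.smul_apply, smul_eq_mul, mul_pow, ← Finset.mul_sum]
  rw [Real.sqrt_mul (sq_nonneg c), Real.sqrt_sq hc.le, smul_smul, mul_inv_rev, mul_assoc,
    inv_mul_cancel₀ hc.ne', mul_one]

lemma contDiffAt_unitPluecker (hp : ∑ I, p I ^ 2 ≠ 0) : ContDiffAt ℝ 1 unitPluecker p := by
  have hsum : ContDiffAt ℝ 1 (fun q : Finset (Fin n) → ℝ => ∑ I, q I ^ 2) p := by fun_prop
  exact ((hsum.sqrt hp).inv (Real.sqrt_ne_zero'.2 (by positivity))).smul contDiffAt_id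

lemma contDiff_torusScale (p : Finset (Fin n) → ℝ) :
    ContDiff ℝ 1 fun y => torusScale y p :=
  contDiff_pi.2 fun I => (((contDiff_apply ℝ ℝ I).comp
    (torusWeight n).toContinuousLinearMap.contDiff).exp).mul contDiff_const

lemma torusScale_add (y z : (Fin n → ℝ) × ℝ) (p : Finset (Fin n) → ℝ) :
    torusScale (y + z) p = torusScale y (torusScale z p) := by
  ext I
  rw [torusScale, torusScale, torusScale, map_add, Pi.add_apply, Real.exp_add, mul_assoc]

lemma exists_torusScale_eq_smul (hp : p ∈ positroidCone n k 𝓜) {y : (Fin n → ℝ) × ℝ}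
    (hy : y.1 ∈ componentSubspace n 𝓜) : ∃ r : ℝ, 0 < r ∧ torusScale y p = r • p := by
  rw [mem_componentSubspace_iff (isBasisFamily_of_mem_positroidCone hp)] at hy
  rcases 𝓜.eq_empty_or_nonempty with rfl | ⟨J, hJ⟩
  · refine ⟨1, one_pos, funext fun I => ?_⟩
    simp [torusScale, eq_zero_of_mem_positroidCone hp]
  refine ⟨Real.exp (torusWeight n y J), Real.exp_pos _, funext fun I => ?_⟩
  rw [torusScale, Pi.smul_apply, smul_eq_mul]
  by_cases hI : I ∈ 𝓜
  · rw [torusWeight_apply, torusWeight_apply, hy I hI J hJ]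
  · rw [eq_zero_of_mem_positroidCone hp hI, mul_zero, mul_zero]

/-- Torus elements constant on components only rescale, so a complement of them already
parametrizes the orbit. -/
lemma IsSingleOrbit.dimH_le (h : IsSingleOrbit n k 𝓜)
    (hne : (positroidCell n k 𝓜).Nonempty) :
    dimH (positroidCell n k 𝓜) ≤ (n - Nat.card (Quot (exchRel n 𝓜)) : ℕ) := by
  obtain ⟨p, hp⟩ := hne
  have hpc := (mem_positroidCell_iff.1 hp).1
  have h𝓜 := nonempty_of_mem_positroidCell hp
  obtain ⟨C, hC⟩ := (componentSubspace n 𝓜).exists_isCompl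
  have hfinrank : Module.finrank ℝ C = n - Nat.card (Quot (exchRel n 𝓜)) := by
    rw [← finrank_componentSubspace, eq_tsub_iff_add_eq_of_le (by
      simpa using (componentSubspace n 𝓜).finrank_le), add_comm,
      Submodule.finrank_add_eq_of_isCompl hC, Module.finrank_fin_fun]
  have hsurj : positroidCell n k 𝓜 ⊆
      Set.range fun c : C => unitPluecker (torusScale ((c : Fin n → ℝ), 0) p) := by
    intro q hq
    obtain ⟨y, rfl⟩ := h p hp q hq
    obtain ⟨θ, hθ, c, hc, hy⟩ := Submodule.mem_sup.1 (hC.sup_eq_top ▸ Submodule.mem_top (x := y.1))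
    obtain ⟨r, hr, hscale⟩ := exists_torusScale_eq_smul (y := (θ, y.2))
      (torusScale_mem_positroidCone (c, 0) hpc) hθ
    refine ⟨⟨c, hc⟩, ?_⟩
    rw [← torusScale_add, Prod.mk_add_mk, hy, add_zero] at hscale
    rw [← unitPluecker_of_sum_sq_eq_one hq.2.1, hscale, unitPluecker_smul_of_pos hr]
  have hsmooth : ContDiff ℝ 1
      fun c : C => unitPluecker (torusScale ((c : Fin n → ℝ), 0) p) := by
    have hscale : ContDiff ℝ 1 fun c : C => torusScale ((c : Fin n → ℝ), 0) p :=
      (contDiff_torusScale p).comp (C.subtypeL.contDiff.prodMk contDiff_const)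
    exact contDiff_iff_contDiffAt.2 fun c => ContDiffAt.comp c (contDiffAt_unitPluecker
      (sum_sq_pos_of_mem_positroidCone h𝓜 (torusScale_mem_positroidCone _ hpc)).ne')
      hscale.contDiffAt
  rw [← hfinrank]
  exact (dimH_mono hsurj).trans hsmooth.dimH_range_le

/-- The logarithms of the Plücker coordinates indexed by `𝓜`, on which the torus acts by
translations. -/
noncomputable def logPluecker (𝓜 : Finset (Finset (Fin n))) (p : Finset (Fin n) → ℝ) : 𝓜 → ℝ :=
  fun I => Real.log (p I)

lemma logPluecker_torusScale (hp : p ∈ positroidCone n k 𝓜) (y : (Fin n → ℝ) × ℝ) :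
    logPluecker 𝓜 (torusScale y p) = (fun I : 𝓜 => torusWeight n y I) + logPluecker 𝓜 p := by
  ext I
  rw [Pi.add_apply, logPluecker, torusScale, Real.log_mul (Real.exp_pos _).ne'
    (pos_of_mem_positroidCone hp I.2).ne', Real.log_exp, logPluecker]

lemma logPluecker_injOn : Set.InjOn (logPluecker 𝓜) (positroidCone n k 𝓜) := by
  intro p hp q hq hpq
  ext I
  by_cases hI : I ∈ 𝓜
  · exact Real.log_injOn_pos (pos_of_mem_positroidCone hp hI) (pos_of_mem_positroidCone hq hI)
      (congrFun hpq ⟨I, hI⟩)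
  · rw [eq_zero_of_mem_positroidCone hp hI, eq_zero_of_mem_positroidCone hq hI]

lemma contDiffAt_logPluecker (hp : p ∈ positroidCone n k 𝓜) :
    ContDiffAt ℝ 1 (logPluecker 𝓜) p :=
  contDiffAt_pi.2 fun I =>
    (contDiff_apply ℝ ℝ (I : Finset (Fin n))).contDiffAt.log (pos_of_mem_positroidCone hp I.2).ne'

lemma exists_torusScale_invariant (hp : p ∈ positroidCone n k 𝓜) (hq : q ∈ positroidCone n k 𝓜)
    (hpq : ∀ y, torusScale y p ≠ q) :
    ∃ φ : (𝓜 → ℝ) →ₗ[ℝ] ℝ, φ (logPluecker 𝓜 p) < φ (logPluecker 𝓜 q) ∧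
      ∀ x ∈ positroidCone n k 𝓜, ∀ y,
        φ (logPluecker 𝓜 (torusScale y x)) = φ (logPluecker 𝓜 x) := by
  have hnot : logPluecker 𝓜 q - logPluecker 𝓜 p ∉ LinearMap.range
      ((LinearMap.funLeft ℝ ℝ ((↑) : 𝓜 → Finset (Fin n))).comp (torusWeight n)) := by
    rintro ⟨y, hy⟩
    refine hpq y (logPluecker_injOn (torusScale_mem_positroidCone y hp) hq ?_)
    rw [logPluecker_torusScale hp]
    exact (sub_eq_iff_eq_add.1 hy.symm).symm
  obtain ⟨φ, hφ, hker⟩ := Submodule.exists_le_ker_of_notMem hnot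
  have hinv : ∀ x ∈ positroidCone n k 𝓜, ∀ y,
      φ (logPluecker 𝓜 (torusScale y x)) = φ (logPluecker 𝓜 x) := fun x hx y => by
    rw [logPluecker_torusScale hx, map_add, add_eq_right]
    exact hker ⟨y, rfl⟩
  rw [map_sub, sub_ne_zero] at hφ
  rcases hφ.lt_or_gt with hlt | hlt
  · exact ⟨-φ, by simpa using hlt, fun x hx y => by simp [hinv x hx y]⟩
  · exact ⟨φ, hlt, hinv⟩

/-- Together with the moment map, an invariant varying along the cell maps it onto a set of one
dimension more than the polytope. -/
lemma lt_dimH_positroidCell_of_invariant {f : (Finset (Fin n) → ℝ) → ℝ}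
    (hf : ∀ x ∈ positroidCell n k 𝓜, ContDiffAt ℝ 1 f x)
    (hinv : ∀ x ∈ positroidCell n k 𝓜, ∀ y, f (torusScale y x) = f x)
    (hp : p ∈ positroidCell n k 𝓜) (hq : q ∈ positroidCell n k 𝓜) (hlt : f p < f q) :
    (n - Nat.card (Quot (exchRel n 𝓜)) : ℕ) < dimH (positroidCell n k 𝓜) := by
  have hIcc : Set.Icc (f p) (f q) ⊆ f '' positroidCell n k 𝓜 :=
    isPreconnected_positroidCell.intermediate_value hp hq
      fun x hx => (hf x hx).continuousAt.continuousWithinAt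
  have hsub : Set.Icc (f p) (f q) ×ˢ openHull 𝓜 (ind n) ⊆
      (fun x => (f x, momentMap n x)) '' positroidCell n k 𝓜 := by
    rintro ⟨r, z⟩ ⟨hr, hz⟩
    obtain ⟨x, hx, rfl⟩ := hIcc hr
    obtain ⟨y, hy, rfl⟩ := exists_momentMap_torusScale_eq (mem_positroidCell_iff.1 hx).1 hz
    exact ⟨_, hy, Prod.ext (hinv x hx y) rfl⟩
  have hne := nonempty_of_mem_positroidCell hp
  have hull := openHull_nonempty (v := ind n) hne
  calc ((n - Nat.card (Quot (exchRel n 𝓜)) : ℕ) : ENNReal)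
      < (n - Nat.card (Quot (exchRel n 𝓜)) + 1 : ℕ) := Nat.cast_lt.2 (Nat.lt_succ_self _)
    _ = dimH (Set.Icc (f p) (f q) ×ˢ openHull 𝓜 (ind n)) := by
      rw [Real.Convex.dimH_eq_finrank_vectorSpan ((convex_Icc _ _).prod convex_openHull)
        ((Set.nonempty_Icc.2 hlt.le).prod hull), finrank_vectorSpan_Icc_prod hlt hull,
        vectorSpan_openHull hne, finrank_vectorSpan_ind (isBasisFamily_of_mem_positroidCell hp)]
    _ ≤ dimH (positroidCell n k 𝓜) := by
      refine (dimH_mono hsub).trans (dimH_image_le_of_locally_lipschitzOn fun x hx => ?_)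
      obtain ⟨K, t, ht, hK⟩ :=
        ((hf x hx).prodMk contDiff_momentMap.contDiffAt).exists_lipschitzOnWith
      exact ⟨K, t, mem_nhdsWithin_of_mem_nhds ht, hK⟩

lemma isSingleOrbit_of_dimH_le
    (hdim : dimH (positroidCell n k 𝓜) ≤ (n - Nat.card (Quot (exchRel n 𝓜)) : ℕ)) :
    IsSingleOrbit n k 𝓜 := by
  intro p hp q hq
  by_contra! hpq
  obtain ⟨φ, hlt, hinv⟩ := exists_torusScale_invariant (mem_positroidCell_iff.1 hp).1
    (mem_positroidCell_iff.1 hq).1 hpq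
  refine hdim.not_gt (lt_dimH_positroidCell_of_invariant (f := fun x => φ (logPluecker 𝓜 x))
    (fun x hx => ?_) (fun x hx => hinv x (mem_positroidCell_iff.1 hx).1) hp hq hlt)
  exact φ.toContinuousLinearMap.contDiff.contDiffAt.comp x
    (contDiffAt_logPluecker (mem_positroidCell_iff.1 hx).1)

end CellDimension

/-- For a positroid cell `S_π ⊆ Gr⁺_{k,n}` with positroid `M_π`, the following
are equivalent: (1) the moment map is injective on `S_π`; (2) the moment map
restricts to a homeomorphism from the closure of `S_π` onto the positroid
polytope `Γ_π`; (3) `dim S_π = dim Γ_π = n − c`, where `c` is the number of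
connected components of `M_π`. -/
theorem moment_map_injective_tfae (n k : ℕ) (𝓜 : Finset (Finset (Fin n)))
    (hcard : ∀ I ∈ 𝓜, I.card = k) (hne : (positroidCell n k 𝓜).Nonempty) :
    (Set.InjOn (momentMap n) (positroidCell n k 𝓜) ↔
      ∃ h : (closure (positroidCell n k 𝓜)) ≃ₜ
          (convexHull ℝ (ind n '' ↑𝓜) : Set (Fin n → ℝ)),
        ∀ x : closure (positroidCell n k 𝓜), (h x : Fin n → ℝ) = momentMap n x) ∧
    (Set.InjOn (momentMap n) (positroidCell n k 𝓜) ↔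
      (dimH (positroidCell n k 𝓜) = (n - Nat.card (Quot (exchRel n 𝓜)) : ℕ) ∧
       dimH (convexHull ℝ (ind n '' ↑𝓜) : Set (Fin n → ℝ))
          = (n - Nat.card (Quot (exchRel n 𝓜)) : ℕ))) := by
  refine ⟨⟨fun h => (isSingleOrbit_of_injOn h).exists_homeomorph hne, ?_⟩,
    ⟨fun h => ⟨?_, dimH_convexHull_ind (isBasisFamily_of_mem_positroidCell hne.some_mem)
      (nonempty_of_mem_positroidCell hne.some_mem)⟩, fun h => ?_⟩⟩
  · rintro ⟨h, hh⟩ x hx y hy hxy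
    have := h.injective (a₁ := ⟨x, subset_closure hx⟩) (a₂ := ⟨y, subset_closure hy⟩)
      (Subtype.ext (by rw [hh, hh]; exact hxy))
    exact congrArg Subtype.val this
  · exact le_antisymm ((isSingleOrbit_of_injOn h).dimH_le hne) (le_dimH_positroidCell hne)
  · exact ((isSingleOrbit_of_dimH_le h.1.le).injOn_closure hne).mono subset_closure
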